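/- arXiv:0709.1667 — 9 statements merged into one kernel-verified Lean document; each statement's English description precedes it below -/
import Mathlib

section
/- Let a k-SAT formula and a partial assignment x*:U→{0,1} be given. A variable i∈V∖U is directly implied by x*_U (via the unit-clause derivation closure) if and only if it is WP-implied, i.e. 𝔲_{a→i}=I for some a∈∂i in the least WP fixed point. -/
open scoped Classical

/-- A k-SAT formula over variables `V` with clause set `A`:
`scope a` is the set `∂a` of variables of clause `a`, and `z a i` is the
value of variable `i` that does NOT satisfy clause `a`. -/
structure KSAT (V A : Type) where
  scope : A → Finset V
  z : A → V → Bool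

namespace KSAT

variable {V A : Type}

/-- `∂i`: clauses containing variable `i`. -/
noncomputable def nbr [Fintype A] (Φ : KSAT V A) (i : V) : Finset A :=
  Finset.univ.filter fun a => i ∈ Φ.scope a

/-- `∂₊i`: clauses in `∂i` with `z(i,a) = 1`. -/
noncomputable def nbrPos [Fintype A] (Φ : KSAT V A) (i : V) : Finset A :=
  (Φ.nbr i).filter fun a => Φ.z a i = true

/-- `∂₋i`: clauses in `∂i` with `z(i,a) = 0`. -/
noncomputable def nbrNeg [Fintype A] (Φ : KSAT V A) (i : V) : Finset A :=
  (Φ.nbr i).filter fun a => Φ.z a i = false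

/-- `∂₋i(a)`: clauses `b ∈ ∂i ∖ {a}` that disagree with `a` on the satisfying
value of `x_i`. -/
noncomputable def disag [Fintype A] [DecidableEq A] (Φ : KSAT V A) (i : V) (a : A) : Finset A :=
  ((Φ.nbr i).erase a).filter fun b => Φ.z b i = !Φ.z a i

/-- `∂₊i(a)`: clauses `b ∈ ∂i ∖ {a}` that agree with `a` on the satisfying
value of `x_i`. -/
noncomputable def agree [Fintype A] [DecidableEq A] (Φ : KSAT V A) (i : V) (a : A) : Finset A :=
  ((Φ.nbr i).erase a).filter fun b => Φ.z b i = Φ.z a i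

/-- Warning propagation update for a variable-to-clause message `𝔥_{i→a}`,
computed from the clause-to-variable messages `u`.  Messages take values in
`Bool`, with `false` standing for `0` and `true` for `I`. -/
noncomputable def stepH [Fintype A] [DecidableEq A] (Φ : KSAT V A) (U : Finset V)
    (xs : V → Bool) (u : A → V → Bool) (i : V) (a : A) : Bool :=
  decide ((i ∈ U ∧ xs i = Φ.z a i) ∨ ∃ b ∈ Φ.disag i a, u b i = true)

/-- Warning propagation update for a clause-to-variable message `𝔲_{a→i}`,
computed from the variable-to-clause messages `h`. -/
noncomputable def stepU [DecidableEq V] (Φ : KSAT V A) (h : V → A → Bool)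
    (a : A) (i : V) : Bool :=
  decide (∀ j ∈ (Φ.scope a).erase i, h j a = true)

/-- A WP fixed point: the update equations hold on every directed edge of the
factor graph. -/
def IsWPFixedPoint [Fintype A] [DecidableEq V] [DecidableEq A] (Φ : KSAT V A)
    (U : Finset V) (xs : V → Bool) (h : V → A → Bool) (u : A → V → Bool) : Prop :=
  ∀ a : A, ∀ i ∈ Φ.scope a,
    h i a = Φ.stepH U xs u i a ∧ u a i = Φ.stepU h a i

end KSAT

namespace KSAT

/-- The derivation closure of the partial assignment `(U, xs)` under
unit-clause propagation: `Derived Φ U xs i v` means the pair `(i, v)` belongs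
to the smallest set of (variable, value) pairs containing `(i, xs i)` for
every `i ∈ U` and closed under unit-clause propagation. -/
inductive Derived [DecidableEq V] (Φ : KSAT V A) (U : Finset V) (xs : V → Bool) :
    V → Bool → Prop
  | fixed (i : V) (hi : i ∈ U) : Derived Φ U xs i (xs i)
  | ucp (a : A) (i : V) (hia : i ∈ Φ.scope a)
      (hrest : ∀ j ∈ (Φ.scope a).erase i, Derived Φ U xs j (Φ.z a j)) :
      Derived Φ U xs i (!Φ.z a i)

end KSAT

open scoped Classical in
theorem KSAT.derived_fixed {V A : Type} [Fintype A] [DecidableEq V] [DecidableEq A]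
    (Φ : KSAT V A) (U : Finset V) (xs : V → Bool) :
    Φ.IsWPFixedPoint U xs (fun i a => decide (KSAT.Derived Φ U xs i (Φ.z a i)))
      (fun a i => decide (∀ j ∈ (Φ.scope a).erase i, KSAT.Derived Φ U xs j (Φ.z a j))) := by
  intro a i hi
  constructor
  · unfold KSAT.stepH
    rw [decide_eq_decide]
    constructor
    · intro hd
      generalize hv : Φ.z a i = v at hd
      cases hd with
      | fixed _ hU => exact Or.inl ⟨hU, rfl⟩
      | ucp b _ hib hrest =>
        refine Or.inr ⟨b, ?_, by simpa using hrest⟩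
        simp only [KSAT.disag, KSAT.nbr, Finset.mem_filter, Finset.mem_erase, Finset.mem_univ,
          true_and]
        refine ⟨⟨?_, hib⟩, by simp [hv]⟩
        rintro rfl
        simp at hv
    · rintro (⟨hU, hx⟩ | ⟨b, hb, hu⟩)
      · rw [← hx]
        exact KSAT.Derived.fixed i hU
      · simp only [KSAT.disag, KSAT.nbr, Finset.mem_filter, Finset.mem_erase, Finset.mem_univ,
          true_and] at hb
        have := KSAT.Derived.ucp (U := U) (xs := xs) b i hb.1.2 (of_decide_eq_true hu)
        rw [hb.2] at this
        simpa using this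
  · simp [KSAT.stepU]

theorem KSAT.derived_imp {V A : Type} [Fintype A] [DecidableEq V] [DecidableEq A]
    (Φ : KSAT V A) (U : Finset V) (xs : V → Bool)
    (h : V → A → Bool) (u : A → V → Bool) (hfp : Φ.IsWPFixedPoint U xs h u)
    (i : V) (v : Bool) (hd : KSAT.Derived Φ U xs i v) :
    (i ∈ U ∧ xs i = v) ∨ ∃ b, i ∈ Φ.scope b ∧ Φ.z b i = !v ∧ u b i = true := by
  induction hd with
  | fixed i hi => exact Or.inl ⟨hi, rfl⟩
  | ucp a i hia hrest ih =>
    refine Or.inr ⟨a, hia, by simp, ?_⟩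
    rw [(hfp a i hia).2]
    unfold KSAT.stepU
    rw [decide_eq_true_iff]
    intro j hj
    rw [(hfp a j (Finset.mem_of_mem_erase hj)).1]
    unfold KSAT.stepH
    refine @decide_eq_true _ (_) ?_
    rcases ih j hj with h1 | ⟨b, hb, hz, hu⟩
    · exact Or.inl h1
    · refine Or.inr ⟨b, ?_, hu⟩
      simp only [KSAT.disag, KSAT.nbr, Finset.mem_filter, Finset.mem_erase, Finset.mem_univ,
        true_and]
      refine ⟨⟨?_, hb⟩, hz⟩
      rintro rfl
      simp at hz

/-- a variable `i ∉ U` is directly implied by the partial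
assignment `xs` on `U` (i.e. it gets a value in the unit-clause derivation
closure) if and only if it is WP-implied, i.e. it receives a message
`𝔲_{a→i} = I` in the least WP fixed point. -/
theorem directly_implied_iff_wp_implied
    {V A : Type} [Fintype V] [Fintype A] [DecidableEq V] [DecidableEq A]
    (k : ℕ) (Φ : KSAT V A) (hk : ∀ a : A, (Φ.scope a).card = k)
    (U : Finset V) (xs : V → Bool)
    (h : V → A → Bool) (u : A → V → Bool)
    (hfp : Φ.IsWPFixedPoint U xs h u)
    (hleast : ∀ h₁ u₁, Φ.IsWPFixedPoint U xs h₁ u₁ →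
      ∀ a : A, ∀ i ∈ Φ.scope a, h i a ≤ h₁ i a ∧ u a i ≤ u₁ a i)
    (i : V) (hiU : i ∉ U) :
    (∃ v : Bool, KSAT.Derived Φ U xs i v) ↔
      (∃ a : A, i ∈ Φ.scope a ∧ u a i = true) := by
  constructor
  · rintro ⟨v, hd⟩
    rcases KSAT.derived_imp Φ U xs h u hfp i v hd with h1 | ⟨b, hb, _, hu⟩
    · exact absurd h1.1 hiU
    · exact ⟨b, hb, hu⟩
  · rintro ⟨a, hia, hu⟩
    have h1 := (hleast _ _ (KSAT.derived_fixed Φ U xs) a i hia).2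
    rw [hu] at h1
    exact ⟨_, KSAT.Derived.ucp a i hia (@of_decide_eq_true _ (_) (h1 rfl))⟩
end

section
/- Let a k-SAT formula and a partial assignment x*:U→{0,1} be given, and let {𝔲_{a→i}} denote the clause-to-variable messages of the least WP fixed point. Say that a variable i∈V is supported to the value v∈{0,1} if either (i∈U and x*_i=v) or there exists a∈∂i with z(i,a)=1−v and 𝔲_{a→i}=I. Then the derivation closure of (U,x*) is contradictory (i.e. contains both (i,0) and (i,1) for some variable i) if and only if some variable i∈V is supported to both values 0 and 1. In particular, when no variable of U is supported to the value opposite to its fixed value, this happens if and only if there exist i∈V, a∈∂₊i and b∈∂₋i with 𝔲_{a→i}=𝔲_{b→i}=I. -/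
open scoped Classical

namespace KSAT

/-- `i` is supported to the value `v`: either `i` is fixed to `v`, or some
clause `a ∈ ∂i` with `z(i,a) = 1 - v` sends the message `𝔲_{a→i} = I`. -/
def Supported [Fintype A] (Φ : KSAT V A) (U : Finset V) (xs : V → Bool)
    (u : A → V → Bool) (i : V) (v : Bool) : Prop :=
  (i ∈ U ∧ xs i = v) ∨ ∃ a ∈ Φ.nbr i, Φ.z a i = !v ∧ u a i = true

end KSAT

theorem KSAT.dec_aux (p : Prop) (inst : Decidable p) : @decide p inst = true ↔ p :=
  decide_eq_true_iff

theorem KSAT.supported_iff_derived_aux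
    {V A : Type} [Fintype V] [Fintype A] [DecidableEq V] [DecidableEq A]
    (Φ : KSAT V A) (U : Finset V) (xs : V → Bool)
    (h : V → A → Bool) (u : A → V → Bool)
    (hfp : Φ.IsWPFixedPoint U xs h u)
    (hleast : ∀ h₁ u₁, Φ.IsWPFixedPoint U xs h₁ u₁ →
      ∀ a : A, ∀ i ∈ Φ.scope a, h i a ≤ h₁ i a ∧ u a i ≤ u₁ a i)
    (i : V) (v : Bool) : KSAT.Derived Φ U xs i v ↔ Φ.Supported U xs u i v := by
  have key : ∀ (u' : A → V → Bool) (i : V) (a : A),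
      Φ.stepH U xs u' i a = true ↔ Φ.Supported U xs u' i (Φ.z a i) := by
    intro u' i a
    unfold KSAT.stepH KSAT.Supported KSAT.disag
    refine Iff.trans (KSAT.dec_aux _ _) ?_
    refine or_congr Iff.rfl ?_
    constructor
    · rintro ⟨b, hb, hu⟩
      rw [Finset.mem_filter, Finset.mem_erase] at hb
      exact ⟨b, hb.1.2, hb.2, hu⟩
    · rintro ⟨b, hb, hz, hu⟩
      refine ⟨b, ?_, hu⟩
      rw [Finset.mem_filter, Finset.mem_erase]
      refine ⟨⟨?_, hb⟩, hz⟩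
      rintro rfl
      simp at hz
  constructor
  · intro hd
    induction hd with
    | fixed i hi => exact Or.inl ⟨hi, rfl⟩
    | ucp a i hia _ ih =>
      refine Or.inr ⟨a, by simp [KSAT.nbr, hia], by simp, ?_⟩
      rw [(hfp a i hia).2]
      unfold KSAT.stepU
      refine (KSAT.dec_aux _ _).2 ?_
      intro j hj
      rw [(hfp a j (Finset.mem_of_mem_erase hj)).1, key]
      exact ih j hj
  · have hfix : Φ.IsWPFixedPoint U xs (fun i a => decide (KSAT.Derived Φ U xs i (Φ.z a i)))
        (fun a i => decide (∀ j ∈ (Φ.scope a).erase i, KSAT.Derived Φ U xs j (Φ.z a j))) := by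
      intro a i _
      constructor
      · rw [Bool.eq_iff_iff, key, decide_eq_true_iff]
        generalize Φ.z a i = w
        constructor
        · intro hd
          cases hd with
          | fixed _ hi => exact Or.inl ⟨hi, rfl⟩
          | ucp b _ hib hr =>
            exact Or.inr ⟨b, by simp [KSAT.nbr, hib], by simp, by simpa using hr⟩
        · rintro (⟨hi, rfl⟩ | ⟨b, hb, hz, hu⟩)
          · exact .fixed i hi
          · have hw : w = !Φ.z b i := by simp [hz]
            rw [hw]
            exact .ucp b i (by simpa [KSAT.nbr] using hb) (of_decide_eq_true hu)
      · simp [KSAT.stepU]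
    rintro (⟨hi, rfl⟩ | ⟨b, hb, hz, hu⟩)
    · exact .fixed i hi
    · have hib : i ∈ Φ.scope b := by simpa [KSAT.nbr] using hb
      have hle := (hleast _ _ hfix b i hib).2
      rw [hu] at hle
      have hw : v = !Φ.z b i := by simp [hz]
      rw [hw]
      exact .ucp b i hib (of_decide_eq_true (hle rfl))

/-- the derivation closure of `(U, xs)` is contradictory iff
some variable is supported (in the least WP fixed point) to both values; and,
provided no fixed variable is supported to the value opposite to its fixed
value, this happens iff some variable receives `I`-messages both from a clause
in `∂₊i` and from a clause in `∂₋i`. -/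
theorem contradiction_iff_doubly_supported
    {V A : Type} [Fintype V] [Fintype A] [DecidableEq V] [DecidableEq A]
    (k : ℕ) (Φ : KSAT V A) (hk : ∀ a : A, (Φ.scope a).card = k)
    (U : Finset V) (xs : V → Bool)
    (h : V → A → Bool) (u : A → V → Bool)
    (hfp : Φ.IsWPFixedPoint U xs h u)
    (hleast : ∀ h₁ u₁, Φ.IsWPFixedPoint U xs h₁ u₁ →
      ∀ a : A, ∀ i ∈ Φ.scope a, h i a ≤ h₁ i a ∧ u a i ≤ u₁ a i) :
    ((∃ i : V, KSAT.Derived Φ U xs i false ∧ KSAT.Derived Φ U xs i true) ↔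
      (∃ i : V, Φ.Supported U xs u i false ∧ Φ.Supported U xs u i true)) ∧
    ((∀ i ∈ U, ¬ Φ.Supported U xs u i (!xs i)) →
      ((∃ i : V, KSAT.Derived Φ U xs i false ∧ KSAT.Derived Φ U xs i true) ↔
        (∃ i : V, ∃ a ∈ Φ.nbrPos i, ∃ b ∈ Φ.nbrNeg i,
          u a i = true ∧ u b i = true))) := by
  have e := KSAT.supported_iff_derived_aux Φ U xs h u hfp hleast
  have e1 : (∃ i : V, KSAT.Derived Φ U xs i false ∧ KSAT.Derived Φ U xs i true) ↔
      (∃ i : V, Φ.Supported U xs u i false ∧ Φ.Supported U xs u i true) := by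
    simp only [e]
  refine ⟨e1, fun hno => e1.trans ?_⟩
  constructor
  · rintro ⟨i, h0, h1⟩
    have hiU : i ∉ U := by
      intro hi
      apply hno i hi
      cases xs i
      · exact h1
      · exact h0
    obtain ⟨hi, _⟩ | ⟨a, ha, hza, hua⟩ := h0
    · exact absurd hi hiU
    obtain ⟨hi, _⟩ | ⟨b, hb, hzb, hub⟩ := h1
    · exact absurd hi hiU
    exact ⟨i, a, Finset.mem_filter.2 ⟨ha, hza⟩, b, Finset.mem_filter.2 ⟨hb, hzb⟩, hua, hub⟩
  · rintro ⟨i, a, ha, b, hb, hua, hub⟩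
    obtain ⟨ha, hza⟩ := Finset.mem_filter.1 ha
    obtain ⟨hb, hzb⟩ := Finset.mem_filter.1 hb
    exact ⟨i, Or.inr ⟨a, ha, hza, hua⟩, Or.inr ⟨b, hb, hzb, hub⟩⟩
end

section
/- Let F be a k-SAT formula in which every clause contains at least 2 distinct variables, and suppose the factor graph of F is acyclic (a forest). Then F is satisfiable. -/
open scoped Classical

namespace KSAT

variable {V A : Type}

/-- An assignment satisfies clause `a` iff some variable of `∂a` differs from
its unsatisfying value. -/
def Satisfies (Φ : KSAT V A) (x : V → Bool) (a : A) : Prop :=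
  ∃ i ∈ Φ.scope a, x i ≠ Φ.z a i

/-- A solution satisfies every clause. -/
def IsSolution (Φ : KSAT V A) (x : V → Bool) : Prop :=
  ∀ a : A, Φ.Satisfies x a

/-- The finite set of solutions of the formula. -/
noncomputable def solutions [Fintype V] [DecidableEq V] (Φ : KSAT V A) :
    Finset (V → Bool) :=
  Finset.univ.filter fun x => Φ.IsSolution x

end KSAT

namespace KSAT

/-- The factor graph of a formula: the bipartite graph on `V ⊕ A` with an edge
between variable `i` and clause `a` iff `i ∈ ∂a`. -/
def factorGraph (Φ : KSAT V A) : SimpleGraph (V ⊕ A) :=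
  SimpleGraph.fromRel fun x y =>
    match x, y with
    | Sum.inl i, Sum.inr a => i ∈ Φ.scope a
    | _, _ => False

end KSAT

theorem forest_aux {W : Type} {G : SimpleGraph W} (hG : G.IsAcyclic) {a b i r s : W}
    (hrs : r = s) (p : G.Walk a r) (q : G.Walk b s) (hp : p.IsPath) (hq : q.IsPath)
    (ha : G.Adj a i) (hb : G.Adj b i) (hpa : i ≠ p.snd) (hqb : i ≠ q.snd) : a = b := by
  subst hrs
  have h1 : i ∉ p.support := fun h => hpa (hG.eq_snd_of_adj_start hp ha h)
  have h2 : i ∉ q.support := fun h => hqb (hG.eq_snd_of_adj_start hq hb h)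
  have h3 := hG.path_unique ⟨_, hp.cons (h := ha.symm) h1⟩ ⟨_, hq.cons (h := hb.symm) h2⟩
  have h4 := congrArg (fun w => w.1.snd) h3
  simpa using h4

/-- a SAT formula in which every clause contains at least two
distinct variables and whose factor graph is acyclic (a forest) is
satisfiable. -/
theorem forest_formula_satisfiable
    {V A : Type} [Fintype V] [Fintype A] [DecidableEq V]
    (Φ : KSAT V A) (hk : ∀ a : A, 2 ≤ (Φ.scope a).card)
    (hacyc : Φ.factorGraph.IsAcyclic) :
    ∃ x : V → Bool, Φ.IsSolution x := by
  have hadj : ∀ a : A, ∀ i ∈ Φ.scope a, Φ.factorGraph.Adj (Sum.inr a) (Sum.inl i) := by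
    intro a i hi
    simp [KSAT.factorGraph, hi]
  have hpath : ∀ v, ∃ p : Φ.factorGraph.Walk v (Φ.factorGraph.connectedComponentMk v).out,
      p.IsPath := by
    intro v
    have : Φ.factorGraph.Reachable v (Φ.factorGraph.connectedComponentMk v).out :=
      (SimpleGraph.ConnectedComponent.exact (Quot.out_eq _)).symm
    exact this.exists_isPath
  choose p hp using hpath
  have hchild : ∀ a : A, ∃ i ∈ Φ.scope a, Sum.inl i ≠ (p (Sum.inr a)).snd := by
    intro a
    obtain ⟨i, hi, j, hj, hij⟩ := Finset.one_lt_card.mp (hk a)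
    by_cases h : Sum.inl i = (p (Sum.inr a)).snd
    · refine ⟨j, hj, fun h' => hij ?_⟩
      exact Sum.inl_injective (h.trans h'.symm)
    · exact ⟨i, hi, h⟩
  choose c hc hcs using hchild
  have hinj : ∀ a b, c a = c b → a = b := by
    intro a b hab
    have ha := hadj a _ (hc a)
    have hb := hadj b _ (hc b)
    have hcb := hcs b
    rw [← hab] at hb hcb
    have hcomp : Φ.factorGraph.connectedComponentMk (Sum.inr a)
        = Φ.factorGraph.connectedComponentMk (Sum.inr b) :=
      SimpleGraph.ConnectedComponent.sound (ha.reachable.trans hb.symm.reachable)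
    exact Sum.inr_injective (forest_aux hacyc (by rw [hcomp]) _ _ (hp _) (hp _) ha hb
      (hcs a) hcb)
  refine ⟨fun i => if h : ∃ a, c a = i then !(Φ.z h.choose i) else false, fun a => ⟨c a, hc a, ?_⟩⟩
  have h : ∃ b, c b = c a := ⟨a, rfl⟩
  have e : h.choose = a := hinj _ _ h.choose_spec
  simp only [dif_pos h, e]
  simp
end

section
/- Let F be a k-SAT formula with k≥2 whose factor graph is a tree, and let μ be the uniform distribution over its (nonempty) set of solutions. Then the BP fixed point equations have a unique solution {h_{i→a},u_{a→i}}, and for every variable i and every v∈{0,1}, the BP marginal ν_i(v) computed from this fixed point equals the true marginal μ(x_i=v). -/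
open scoped Classical

namespace KSAT

variable {V A : Type}

/-- The BP clause-to-variable update
`f((h_{j→a})_{j ∈ ∂a∖i}) = -(1/2)·log(1 - 2^{-(k-1)}·∏ (1 - tanh h_{j→a}))`. -/
noncomputable def bpUval [DecidableEq V] (Φ : KSAT V A) (k : ℕ)
    (h : V → A → ℝ) (a : A) (i : V) : ℝ :=
  -(1 / 2) * Real.log
    (1 - (∏ j ∈ (Φ.scope a).erase i, (1 - Real.tanh (h j a))) / 2 ^ (k - 1))

/-- A BP fixed point: the BP update equations hold on every directed edge of
the factor graph. -/
def IsBPFixedPoint [Fintype A] [DecidableEq V] [DecidableEq A] (Φ : KSAT V A)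
    (k : ℕ) (h : V → A → ℝ) (u : A → V → ℝ) : Prop :=
  ∀ a : A, ∀ i ∈ Φ.scope a,
    h i a = (∑ b ∈ Φ.agree i a, u b i) - (∑ b ∈ Φ.disag i a, u b i) ∧
    u a i = Φ.bpUval k h a i

/-- The local field `h_i = Σ_{a ∈ ∂₊i} u_{a→i} - Σ_{a ∈ ∂₋i} u_{a→i}`. -/
noncomputable def field [Fintype A] (Φ : KSAT V A) (u : A → V → ℝ) (i : V) : ℝ :=
  (∑ a ∈ Φ.nbrPos i, u a i) - ∑ a ∈ Φ.nbrNeg i, u a i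

/-- The BP marginal `ν_i(v)`; the value `0` is encoded by `false` and `1` by
`true`, so `ν_i(0) = (1 + tanh h_i)/2` and `ν_i(1) = (1 - tanh h_i)/2`. -/
noncomputable def bpMarginal [Fintype A] (Φ : KSAT V A) (u : A → V → ℝ)
    (i : V) (v : Bool) : ℝ :=
  if v then (1 - Real.tanh (Φ.field u i)) / 2 else (1 + Real.tanh (Φ.field u i)) / 2

end KSAT

namespace KSAT

lemma tree_step {W : Type} {G : SimpleGraph W} (hG : G.IsTree) {w x y y' : W}
    (h1 : G.Adj x y) (h2 : G.Adj x y') (hne : y ≠ y') (hd : G.dist w y ≤ G.dist w x) :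
    G.dist w x < G.dist w y' := by
  by_contra hcon
  push Not at hcon
  have key : ∀ t, G.Adj x t → G.dist w t ≤ G.dist w x →
      ∃ p : G.Walk w t, ∃ h : G.Adj t x, (p.concat h).IsPath := by
    intro t ht hdt
    obtain ⟨p, hp, hl⟩ := hG.connected.exists_path_of_dist w t
    refine ⟨p, ht.symm, ?_⟩
    refine SimpleGraph.Walk.IsPath.concat hp ?_ ht.symm
    intro hx
    have hlen : (p.takeUntil x hx).length + (p.dropUntil x hx).length = p.length := by
      rw [← SimpleGraph.Walk.length_append, SimpleGraph.Walk.take_spec]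
    have h0 : G.dist w x ≤ (p.takeUntil x hx).length := SimpleGraph.dist_le _
    have h3 : (p.dropUntil x hx).length ≠ 0 := by
      intro h
      exact ht.ne (SimpleGraph.Walk.eq_of_length_eq_zero h)
    omega
  obtain ⟨p, h, hp⟩ := key y h1 hd
  obtain ⟨p', h', hp'⟩ := key y' h2 hcon
  have e : p.concat h = p'.concat h' := congrArg Subtype.val
    ((hG.isAcyclic.subsingleton_path w x).elim ⟨_, hp⟩ ⟨_, hp'⟩)
  obtain ⟨e1, _⟩ := SimpleGraph.Walk.concat_inj e
  exact hne e1

variable {V A : Type}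

lemma mem_nbr [Fintype A] (Φ : KSAT V A) (i : V) (a : A) : a ∈ Φ.nbr i ↔ i ∈ Φ.scope a := by
  simp [nbr]

lemma adj_iff (Φ : KSAT V A) (i : V) (a : A) :
    Φ.factorGraph.Adj (Sum.inl i) (Sum.inr a) ↔ i ∈ Φ.scope a := by
  simp [factorGraph, SimpleGraph.fromRel_adj]

lemma peel [DecidableEq V] [DecidableEq A] (Φ : KSAT V A) (hne : ∀ a, (Φ.scope a).Nonempty)
    (ht : Φ.factorGraph.IsTree) (r : V) (B : Finset A) (hB : B.Nonempty) :
    ∃ a ∈ B, ∃ p ∈ Φ.scope a, ∀ j ∈ (Φ.scope a).erase p, j ≠ r ∧ ∀ b ∈ B.erase a, j ∉ Φ.scope b := by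
  obtain ⟨a, haB, hmax⟩ := B.exists_max_image
    (fun a => Φ.factorGraph.dist (Sum.inl r) (Sum.inr a)) hB
  have : ∃ p ∈ Φ.scope a, ∀ j ∈ (Φ.scope a).erase p,
      Φ.factorGraph.dist (Sum.inl r) (Sum.inr a) < Φ.factorGraph.dist (Sum.inl r) (Sum.inl j) := by
    by_cases h : ∃ p ∈ Φ.scope a,
      Φ.factorGraph.dist (Sum.inl r) (Sum.inl p) ≤ Φ.factorGraph.dist (Sum.inl r) (Sum.inr a)
    · obtain ⟨p, hp, hd⟩ := h
      refine ⟨p, hp, fun j hj => ?_⟩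
      rw [Finset.mem_erase] at hj
      refine tree_step ht ((Φ.adj_iff p a).2 hp).symm ((Φ.adj_iff j a).2 hj.2).symm ?_ hd
      intro e
      exact hj.1 (Sum.inl_injective e).symm
    · push Not at h
      obtain ⟨p, hp⟩ := hne a
      exact ⟨p, hp, fun j hj => h j (Finset.mem_of_mem_erase hj)⟩
  obtain ⟨p, hp, hj⟩ := this
  refine ⟨a, haB, p, hp, fun j hjm => ⟨?_, ?_⟩⟩
  · rintro rfl
    have := hj j hjm
    simp at this
  · intro b hb hjb
    rw [Finset.mem_erase] at hb
    have h1 := tree_step ht ((Φ.adj_iff j a).2 (Finset.mem_of_mem_erase hjm)) ((Φ.adj_iff j b).2 hjb)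
      (fun e => hb.1 (Sum.inr_injective e).symm) (hj j hjm).le
    have h2 := hmax b hb.2
    have h3 := hj j hjm
    omega

noncomputable def rk [Fintype V] [Fintype A] (Φ : KSAT V A) (i : V) (a : A) : ℕ :=
  (Finset.univ.filter fun w : V ⊕ A =>
    Φ.factorGraph.dist w (Sum.inl i) < Φ.factorGraph.dist w (Sum.inr a)).card

lemma rk_lt [Fintype V] [Fintype A] (Φ : KSAT V A) (ht : Φ.factorGraph.IsTree)
    {i j : V} {a b : A} (hia : i ∈ Φ.scope a) (hib : i ∈ Φ.scope b) (hjb : j ∈ Φ.scope b)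
    (hij : j ≠ i) (hab : b ≠ a) : Φ.rk j b < Φ.rk i a := by
  unfold rk
  apply Finset.card_lt_card
  rw [Finset.ssubset_iff_of_subset]
  · refine ⟨Sum.inl i, ?_, ?_⟩
    · simp only [Finset.mem_filter, Finset.mem_univ, true_and, SimpleGraph.dist_self]
      exact ht.connected.pos_dist_of_ne (by simp)
    · simp only [Finset.mem_filter, Finset.mem_univ, true_and, not_lt]
      rw [SimpleGraph.dist_eq_one_iff_adj.2 ((Φ.adj_iff i b).2 hib)]
      exact ht.connected.pos_dist_of_ne (fun e => hij (Sum.inl_injective e).symm)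
  · intro w hw
    simp only [Finset.mem_filter, Finset.mem_univ, true_and] at hw ⊢
    have h1 := tree_step ht ((Φ.adj_iff j b).2 hjb).symm ((Φ.adj_iff i b).2 hib).symm
      (fun e => hij (Sum.inl_injective e)) hw.le
    exact tree_step ht ((Φ.adj_iff i b).2 hib) ((Φ.adj_iff i a).2 hia)
      (fun e => hab (Sum.inr_injective e)) h1.le

noncomputable def bpStep [Fintype A] [DecidableEq V] [DecidableEq A] (Φ : KSAT V A) (k : ℕ)
    (h : V → A → ℝ) (i : V) (a : A) : ℝ :=
  (∑ b ∈ Φ.agree i a, Φ.bpUval k h b i) - (∑ b ∈ Φ.disag i a, Φ.bpUval k h b i)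

lemma bpStep_congr [Fintype V] [Fintype A] [DecidableEq V] [DecidableEq A] (Φ : KSAT V A) (k : ℕ)
    (ht : Φ.factorGraph.IsTree) (h h' : V → A → ℝ) (i : V) (a : A) (hia : i ∈ Φ.scope a)
    (H : ∀ j b, j ∈ Φ.scope b → Φ.rk j b < Φ.rk i a → h j b = h' j b) :
    Φ.bpStep k h i a = Φ.bpStep k h' i a := by
  have key : ∀ b, b ∈ (Φ.nbr i).erase a → Φ.bpUval k h b i = Φ.bpUval k h' b i := by
    intro b hb
    simp only [Finset.mem_erase, nbr, Finset.mem_filter, Finset.mem_univ, true_and] at hb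
    unfold bpUval
    congr 4
    apply Finset.prod_congr rfl
    intro j hj
    rw [Finset.mem_erase] at hj
    rw [H j b hj.2 (Φ.rk_lt ht hia hb.2 hj.2 hj.1 hb.1)]
  unfold bpStep
  congr 1
  · exact Finset.sum_congr rfl fun b hb => key b (Finset.mem_filter.1 hb).1
  · exact Finset.sum_congr rfl fun b hb => key b (Finset.mem_filter.1 hb).1

lemma seq_eq [Fintype V] [Fintype A] [DecidableEq V] [DecidableEq A] (Φ : KSAT V A) (k : ℕ)
    (ht : Φ.factorGraph.IsTree) (g g' : ℕ → V → A → ℝ)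
    (hg : ∀ n, ∀ i a, i ∈ Φ.scope a → g (n+1) i a = Φ.bpStep k (g n) i a)
    (hg' : ∀ n, ∀ i a, i ∈ Φ.scope a → g' (n+1) i a = Φ.bpStep k (g' n) i a) (n : ℕ) :
    ∀ i a, i ∈ Φ.scope a → Φ.rk i a < n → g n i a = g' n i a := by
  induction n with
  | zero => intro i a _ h; omega
  | succ n ih =>
    intro i a hia hr
    rw [hg n i a hia, hg' n i a hia]
    exact Φ.bpStep_congr k ht _ _ i a hia fun j b hjb hlt => ih j b hjb (by omega)

lemma rk_bound [Fintype V] [Fintype A] (Φ : KSAT V A) (i : V) (a : A) :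
    Φ.rk i a < Fintype.card (V ⊕ A) + 1 := by
  unfold rk
  exact Nat.lt_succ_of_le (Finset.card_le_univ _)

lemma exists_fp [Fintype V] [Fintype A] [DecidableEq V] [DecidableEq A] (Φ : KSAT V A) (k : ℕ)
    (ht : Φ.factorGraph.IsTree) :
    ∃ (h : V → A → ℝ) (u : A → V → ℝ), Φ.IsBPFixedPoint k h u := by
  let g : ℕ → V → A → ℝ := fun n => Nat.rec (fun _ _ => 0) (fun _ h => Φ.bpStep k h) n
  have := Φ.seq_eq k ht g (fun n => g (n+1)) (fun _ _ _ _ => rfl) (fun _ _ _ _ => rfl)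
    (Fintype.card (V ⊕ A) + 1)
  refine ⟨g (Fintype.card (V ⊕ A) + 1), Φ.bpUval k (g (Fintype.card (V ⊕ A) + 1)), ?_⟩
  intro a i hia
  exact ⟨this i a hia (Φ.rk_bound i a), rfl⟩

lemma fp_step [Fintype A] [DecidableEq V] [DecidableEq A] (Φ : KSAT V A) (k : ℕ)
    (h : V → A → ℝ) (u : A → V → ℝ) (H : Φ.IsBPFixedPoint k h u) (i : V) (a : A)
    (hia : i ∈ Φ.scope a) : h i a = Φ.bpStep k h i a := by
  rw [(H a i hia).1]
  unfold bpStep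
  congr 1 <;> refine Finset.sum_congr rfl fun b hb => (H b i ?_).2
  all_goals
    have := Finset.mem_of_mem_erase (Finset.mem_filter.1 hb).1
    exact (Φ.mem_nbr i b).1 this

lemma unique_fp [Fintype V] [Fintype A] [DecidableEq V] [DecidableEq A] (Φ : KSAT V A) (k : ℕ)
    (ht : Φ.factorGraph.IsTree) (h h' : V → A → ℝ) (u u' : A → V → ℝ)
    (H : Φ.IsBPFixedPoint k h u) (H' : Φ.IsBPFixedPoint k h' u') (a : A) (i : V)
    (hia : i ∈ Φ.scope a) : h i a = h' i a ∧ u a i = u' a i := by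
  have key : ∀ i a, i ∈ Φ.scope a → h i a = h' i a := fun i a hia =>
    Φ.seq_eq k ht (fun _ => h) (fun _ => h') (fun _ => Φ.fp_step k h u H)
      (fun _ => Φ.fp_step k h' u' H') _ i a hia (Φ.rk_bound i a)
  refine ⟨key i a hia, ?_⟩
  rw [(H a i hia).2, (H' a i hia).2]
  unfold bpUval
  congr 4
  exact Finset.prod_congr rfl fun j hj => by rw [key j a (Finset.mem_of_mem_erase hj)]

def sg (c v : Bool) : ℝ := if v = c then -1 else 1

lemma field_sg [Fintype A] (Φ : KSAT V A) (u : A → V → ℝ) (i : V) (v : Bool) :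
    Φ.field u i * sg true v = ∑ b ∈ Φ.nbr i, u b i * sg (Φ.z b i) v := by
  have h1 : Φ.field u i = ∑ b ∈ Φ.nbr i, (if Φ.z b i = true then u b i else - u b i) := by
    unfold field nbrPos nbrNeg
    rw [Finset.sum_filter, Finset.sum_filter, ← Finset.sum_sub_distrib]
    refine Finset.sum_congr rfl fun b _ => ?_
    cases Φ.z b i <;> simp
  rw [h1, Finset.sum_mul]
  refine Finset.sum_congr rfl fun b _ => ?_
  cases Φ.z b i <;> cases v <;> simp [sg]

lemma msg_sg [Fintype A] [DecidableEq V] [DecidableEq A] (Φ : KSAT V A) (k : ℕ)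
    (h : V → A → ℝ) (u : A → V → ℝ) (H : Φ.IsBPFixedPoint k h u) (i : V) (a : A)
    (hia : i ∈ Φ.scope a) (v : Bool) :
    Φ.field u i * sg true v = h i a * sg (Φ.z a i) v + u a i * sg (Φ.z a i) v := by
  rw [field_sg, ← Finset.sum_erase_add _ _ ((Φ.mem_nbr i a).2 hia)]
  congr 1
  rw [(H a i hia).1]
  unfold agree disag
  rw [Finset.sum_filter, Finset.sum_filter, ← Finset.sum_sub_distrib, Finset.sum_mul]
  refine Finset.sum_congr rfl fun b _ => ?_
  cases Φ.z b i <;> cases Φ.z a i <;> cases v <;> simp [sg]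

lemma tanh_half (t : ℝ) : (1 - Real.tanh t) / 2 = Real.exp (-t) / (Real.exp t + Real.exp (-t)) := by
  rw [Real.tanh_eq_sinh_div_cosh, Real.sinh_eq, Real.cosh_eq]
  have := Real.exp_pos t
  have := Real.exp_pos (-t)
  field_simp
  ring

lemma u_exp [DecidableEq V] (Φ : KSAT V A) (k : ℕ) (hk2 : 2 ≤ k)
    (hk : ∀ a : A, (Φ.scope a).card = k) (h : V → A → ℝ) (a : A) (i : V) (hia : i ∈ Φ.scope a) :
    Real.exp (-2 * Φ.bpUval k h a i) = 1 - ∏ j ∈ (Φ.scope a).erase i,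
      (Real.exp (-(h j a)) / (Real.exp (h j a) + Real.exp (-(h j a)))) := by
  have hc : ((Φ.scope a).erase i).card = k - 1 := by rw [Finset.card_erase_of_mem hia, hk a]
  have e : (∏ j ∈ (Φ.scope a).erase i, (1 - Real.tanh (h j a))) / 2 ^ (k - 1) =
      ∏ j ∈ (Φ.scope a).erase i,
      (Real.exp (-(h j a)) / (Real.exp (h j a) + Real.exp (-(h j a)))) := by
    rw [← hc, ← Finset.prod_const, ← Finset.prod_div_distrib]
    exact Finset.prod_congr rfl fun j _ => tanh_half _
  unfold bpUval
  rw [e]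
  have hlt : ∏ j ∈ (Φ.scope a).erase i,
      (Real.exp (-(h j a)) / (Real.exp (h j a) + Real.exp (-(h j a)))) < 1 := by
    have hne : ((Φ.scope a).erase i).Nonempty := by
      rw [← Finset.card_pos, hc]; omega
    calc _ < ∏ j ∈ (Φ.scope a).erase i, (1:ℝ) := by
          apply Finset.prod_lt_prod_of_nonempty _ _ hne
          · intro j _; positivity
          · intro j _
            rw [div_lt_one (by positivity)]
            linarith [Real.exp_pos (h j a)]
      _ = 1 := by simp
  rw [show ∀ y : ℝ, -2 * (-(1/2) * y) = y by intro y; ring, Real.exp_log (by linarith)]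

section sums
variable [Fintype V] [DecidableEq V]

lemma sum_pw (T : Finset V) (f : (V → Bool) → ℝ) :
    ∑ x : V → Bool, ∑ y : V → Bool, f (T.piecewise y x) =
      Fintype.card (V → Bool) * ∑ x : V → Bool, f x := by
  let e : (V → Bool) × (V → Bool) ≃ (V → Bool) × (V → Bool) :=
    { toFun := fun q => (T.piecewise q.2 q.1, T.piecewise q.1 q.2)
      invFun := fun q => (T.piecewise q.2 q.1, T.piecewise q.1 q.2)
      left_inv := by
        rintro ⟨x, y⟩
        ext j <;> by_cases hj : j ∈ T <;> simp [hj]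
      right_inv := by
        rintro ⟨x, y⟩
        ext j <;> by_cases hj : j ∈ T <;> simp [hj] }
  rw [← Fintype.sum_prod_type' (f := fun x y => f (T.piecewise y x))]
  have := Equiv.sum_comp e (fun q => f q.1)
  have h2 : ∑ q : (V → Bool) × (V → Bool), f (T.piecewise q.2 q.1) =
    ∑ q : (V → Bool) × (V → Bool), f q.1 := this
  rw [h2, Fintype.sum_prod_type]
  simp [Finset.mul_sum]

lemma sum_ratio (T : Finset V) (R g1 g2 : (V → Bool) → ℝ) (c1 c2 : ℝ) (hc2 : c2 ≠ 0)
    (hR : ∀ x y, R (T.piecewise y x) = R x)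
    (h1 : ∀ x, ∑ y, g1 (T.piecewise y x) = c1) (h2 : ∀ x, ∑ y, g2 (T.piecewise y x) = c2) :
    ∑ x, R x * g1 x = (c1 / c2) * ∑ x, R x * g2 x := by
  have hN : (Fintype.card (V → Bool) : ℝ) ≠ 0 := by
    exact_mod_cast Fintype.card_ne_zero
  have e : ∀ (g : (V → Bool) → ℝ) (c : ℝ), (∀ x, ∑ y, g (T.piecewise y x) = c) →
      Fintype.card (V → Bool) * ∑ x, R x * g x = (∑ x, R x) * c := by
    intro g c hg
    rw [← sum_pw T (fun x => R x * g x), Finset.sum_mul]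
    refine Finset.sum_congr rfl fun x _ => ?_
    simp only [hR, ← Finset.mul_sum, hg]
  have e1 := e g1 c1 h1
  have e2 := e g2 c2 h2
  apply mul_left_cancel₀ hN
  rw [e1, mul_left_comm, e2]
  field_simp

lemma sum_prod (T : Finset V) (φ : V → Bool → ℝ) :
    ∑ y : V → Bool, ∏ j ∈ T, φ j (y j) =
      2 ^ (Tᶜ.card) * ∏ j ∈ T, (φ j true + φ j false) := by
  have h1 : ∀ y : V → Bool, ∏ j ∈ T, φ j (y j) = ∏ j, (if j ∈ T then φ j (y j) else 1) := by
    intro y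
    rw [Finset.prod_ite_mem, Finset.univ_inter]
  simp only [h1]
  have h2 := Finset.prod_univ_sum (fun _ : V => (Finset.univ : Finset Bool))
    (fun j v => (if j ∈ T then φ j v else (1:ℝ)))
  rw [Fintype.piFinset_univ] at h2
  rw [← h2, ← Finset.prod_mul_prod_compl T, mul_comm]
  congr 1
  · rw [← Finset.prod_const]
    refine Finset.prod_congr rfl fun j hj => ?_
    rw [Finset.mem_compl] at hj
    simp [hj]
  · exact Finset.prod_congr rfl fun j hj => by simp [hj]

end sums

noncomputable def psi (Φ : KSAT V A) (a : A) (x : V → Bool) : ℝ :=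
  1 - ∏ i ∈ Φ.scope a, (if x i = Φ.z a i then (1:ℝ) else 0)

lemma psi_eq (Φ : KSAT V A) (a : A) (x : V → Bool) :
    Φ.psi a x = if Φ.Satisfies x a then 1 else 0 := by
  unfold psi Satisfies
  split_ifs with h
  · obtain ⟨i, hi, hx⟩ := h
    rw [Finset.prod_eq_zero hi (by simp [hx])]
    simp
  · push Not at h
    rw [Finset.prod_congr rfl (fun i hi => if_pos (h i hi))]
    simp

/-- summing a clause weight over all variables but one -/
lemma clause_sum [Fintype V] [Fintype A] [DecidableEq V] [DecidableEq A] (Φ : KSAT V A) (k : ℕ)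
    (hk2 : 2 ≤ k) (hk : ∀ a : A, (Φ.scope a).card = k)
    (h : V → A → ℝ) (u : A → V → ℝ) (H : Φ.IsBPFixedPoint k h u) (a : A) (p : V)
    (hp : p ∈ Φ.scope a) (x : V → Bool) :
    ∑ y : V → Bool, (fun x : V → Bool => Φ.psi a x *
        (∏ j ∈ (Φ.scope a).erase p, Real.exp (h j a * sg (Φ.z a j) (x j))) /
        Real.exp (u a p * sg (Φ.z a p) (x p))) (((Φ.scope a).erase p).piecewise y x) =
      2 ^ (((Φ.scope a).erase p)ᶜ.card) *
        (∏ j ∈ (Φ.scope a).erase p, (Real.exp (h j a) + Real.exp (-(h j a)))) *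
        Real.exp (- u a p) := by
  set T := (Φ.scope a).erase p with hT
  have hpT : p ∉ T := by simp [hT]
  have e1 : ∀ y : V → Bool, Φ.psi a (T.piecewise y x) *
        (∏ j ∈ T, Real.exp (h j a * sg (Φ.z a j) (T.piecewise y x j))) =
      (∏ j ∈ T, Real.exp (h j a * sg (Φ.z a j) (y j))) -
      (if x p = Φ.z a p then (1:ℝ) else 0) *
        ∏ j ∈ T, ((if y j = Φ.z a j then (1:ℝ) else 0) * Real.exp (h j a * sg (Φ.z a j) (y j))) := by
    intro y
    unfold psi
    rw [← Finset.mul_prod_erase _ _ hp, ← hT, Finset.piecewise_eq_of_notMem _ _ _ hpT,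
      Finset.prod_mul_distrib]
    have a1 : ∏ j ∈ T, Real.exp (h j a * sg (Φ.z a j) (T.piecewise y x j)) =
        ∏ j ∈ T, Real.exp (h j a * sg (Φ.z a j) (y j)) :=
      Finset.prod_congr rfl fun j hj => by rw [Finset.piecewise_eq_of_mem _ _ _ hj]
    have a2 : ∏ j ∈ T, (if T.piecewise y x j = Φ.z a j then (1:ℝ) else 0) =
        ∏ j ∈ T, (if y j = Φ.z a j then (1:ℝ) else 0) :=
      Finset.prod_congr rfl fun j hj => by rw [Finset.piecewise_eq_of_mem _ _ _ hj]
    rw [a1, a2]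
    ring
  simp only [e1, Finset.piecewise_eq_of_notMem _ _ _ hpT]
  rw [← Finset.sum_div, Finset.sum_sub_distrib, ← Finset.mul_sum,
    sum_prod T (fun j v => Real.exp (h j a * sg (Φ.z a j) v)),
    sum_prod T (fun j v => (if v = Φ.z a j then (1:ℝ) else 0) * Real.exp (h j a * sg (Φ.z a j) v))]
  have b1 : ∏ j ∈ T, (Real.exp (h j a * sg (Φ.z a j) true) + Real.exp (h j a * sg (Φ.z a j) false))
      = ∏ j ∈ T, (Real.exp (h j a) + Real.exp (-(h j a))) :=
    Finset.prod_congr rfl fun j _ => by cases Φ.z a j <;> simp [sg, add_comm]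
  have b2 : ∏ j ∈ T, ((if true = Φ.z a j then (1:ℝ) else 0) * Real.exp (h j a * sg (Φ.z a j) true)
        + (if false = Φ.z a j then (1:ℝ) else 0) * Real.exp (h j a * sg (Φ.z a j) false))
      = ∏ j ∈ T, Real.exp (-(h j a)) :=
    Finset.prod_congr rfl fun j _ => by cases Φ.z a j <;> simp [sg]
  rw [b1, b2]
  have hu := Φ.u_exp k hk2 hk h a p hp
  rw [← (H a p hp).2, Finset.prod_div_distrib, ← hT] at hu
  have hK : 0 < ∏ j ∈ T, (Real.exp (h j a) + Real.exp (-(h j a))) :=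
    Finset.prod_pos fun j _ => by positivity
  set K := ∏ j ∈ T, (Real.exp (h j a) + Real.exp (-(h j a)))
  set L := ∏ j ∈ T, Real.exp (-(h j a))
  have hL : L = K * (1 - Real.exp (-2 * u a p)) := by
    rw [hu]; field_simp; ring
  rw [hL, div_eq_iff (Real.exp_pos _).ne']
  by_cases hx : x p = Φ.z a p
  · simp only [hx, sg, if_true]
    rw [mul_assoc _ (Real.exp _) (Real.exp _), ← Real.exp_add,
      show -u a p + u a p * -1 = -2 * u a p by ring]
    ring
  · simp only [hx, sg, if_false]
    rw [mul_assoc _ (Real.exp _) (Real.exp _), ← Real.exp_add,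
      show -u a p + u a p * 1 = 0 by ring]
    simp

noncomputable def wt [Fintype V] [Fintype A] (Φ : KSAT V A) (u : A → V → ℝ) (B : Finset A)
    (x : V → Bool) : ℝ :=
  (∏ a ∈ B, (Φ.psi a x / ∏ i ∈ Φ.scope a, Real.exp (u a i * sg (Φ.z a i) (x i)))) *
    ∏ i, Real.exp (Φ.field u i * sg true (x i))

lemma wt_univ [Fintype V] [Fintype A] (Φ : KSAT V A) (u : A → V → ℝ) (x : V → Bool) :
    Φ.wt u Finset.univ x = if Φ.IsSolution x then 1 else 0 := by
  have h1 : ∏ i, Real.exp (Φ.field u i * sg true (x i)) =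
      ∏ a : A, ∏ i ∈ Φ.scope a, Real.exp (u a i * sg (Φ.z a i) (x i)) := by
    simp only [field_sg, Real.exp_sum]
    exact Finset.prod_comm' (by intro i a; simp [mem_nbr])
  unfold wt
  rw [h1, ← Finset.prod_mul_distrib]
  have h2 : ∀ a : A, Φ.psi a x / (∏ i ∈ Φ.scope a, Real.exp (u a i * sg (Φ.z a i) (x i))) *
      (∏ i ∈ Φ.scope a, Real.exp (u a i * sg (Φ.z a i) (x i))) = Φ.psi a x := fun a =>
    div_mul_cancel₀ _ (Finset.prod_pos fun i _ => Real.exp_pos _).ne'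
  rw [Finset.prod_congr rfl fun a _ => h2 a]
  simp only [psi_eq]
  unfold IsSolution
  split_ifs with hs
  · exact Finset.prod_eq_one fun a _ => if_pos (hs a)
  · push Not at hs
    obtain ⟨a, ha⟩ := hs
    exact Finset.prod_eq_zero (Finset.mem_univ a) (if_neg ha)

lemma wt_peel [Fintype V] [Fintype A] [DecidableEq V] [DecidableEq A] (Φ : KSAT V A) (k : ℕ)
    (hk2 : 2 ≤ k) (hk : ∀ a : A, (Φ.scope a).card = k)
    (h : V → A → ℝ) (u : A → V → ℝ) (H : Φ.IsBPFixedPoint k h u) (r : V) (B : Finset A)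
    (a : A) (haB : a ∈ B) (p : V) (hp : p ∈ Φ.scope a)
    (hpeel : ∀ j ∈ (Φ.scope a).erase p, j ≠ r ∧ ∀ b ∈ B.erase a, j ∉ Φ.scope b) :
    ∃ c : ℝ, ∀ v : Bool, ∑ x : V → Bool, (if x r = v then 1 else 0) * Φ.wt u B x =
      c * ∑ x : V → Bool, (if x r = v then 1 else 0) * Φ.wt u (B.erase a) x := by
  set T := (Φ.scope a).erase p with hT
  have hpT : p ∉ T := by simp [hT]
  let c1 := 2 ^ (Tᶜ.card) * (∏ j ∈ T, (Real.exp (h j a) + Real.exp (-(h j a)))) *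
        Real.exp (- u a p)
  let c2 : ℝ := 2 ^ (Tᶜ.card) * ∏ j ∈ T, (Real.exp (Φ.field u j * sg true true)
      + Real.exp (Φ.field u j * sg true false))
  have hc2 : c2 ≠ 0 := by
    have : 0 < ∏ j ∈ T, (Real.exp (Φ.field u j * sg true true)
      + Real.exp (Φ.field u j * sg true false)) := Finset.prod_pos fun j _ => by positivity
    positivity
  refine ⟨c1 / c2, fun v => ?_⟩
  let R : (V → Bool) → ℝ := fun x => (if x r = v then 1 else 0) *
    (∏ b ∈ B.erase a, (Φ.psi b x / ∏ i ∈ Φ.scope b, Real.exp (u b i * sg (Φ.z b i) (x i)))) *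
    ∏ i ∈ Tᶜ, Real.exp (Φ.field u i * sg true (x i))
  let g1 : (V → Bool) → ℝ := fun x => Φ.psi a x *
        (∏ j ∈ T, Real.exp (h j a * sg (Φ.z a j) (x j))) /
        Real.exp (u a p * sg (Φ.z a p) (x p))
  let g2 : (V → Bool) → ℝ := fun x => ∏ j ∈ T, Real.exp (Φ.field u j * sg true (x j))
  have main := sum_ratio T R g1 g2 c1 c2 hc2 ?_ ?_ ?_
  · convert main using 2
    · rename_i x _
      simp only [R, g1, wt]
      rw [← Finset.mul_prod_erase _ _ haB, ← Finset.mul_prod_erase _ _ hp, ← hT,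
        ← Finset.prod_mul_prod_compl T (fun i => Real.exp (Φ.field u i * sg true (x i)))]
      have e : ∏ j ∈ T, Real.exp (Φ.field u j * sg true (x j)) =
          (∏ j ∈ T, Real.exp (h j a * sg (Φ.z a j) (x j))) *
          ∏ j ∈ T, Real.exp (u a j * sg (Φ.z a j) (x j)) := by
        rw [← Finset.prod_mul_distrib]
        refine Finset.prod_congr rfl fun j hj => ?_
        rw [Φ.msg_sg k h u H j a (Finset.mem_of_mem_erase hj), Real.exp_add]
      rw [e]
      have hpos : 0 < ∏ j ∈ T, Real.exp (u a j * sg (Φ.z a j) (x j)) :=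
        Finset.prod_pos fun j _ => Real.exp_pos _
      have hpos2 := Real.exp_pos (u a p * sg (Φ.z a p) (x p))
      field_simp
    · refine Finset.sum_congr rfl fun x _ => ?_
      simp only [R, g2, wt]
      rw [← Finset.prod_mul_prod_compl T (fun i => Real.exp (Φ.field u i * sg true (x i)))]
      ring
  · intro x y
    simp only [R]
    have hr : r ∉ T := fun hr => (hpeel r hr).1 rfl
    rw [Finset.piecewise_eq_of_notMem _ _ _ hr]
    congr 1
    · congr 1
      refine Finset.prod_congr rfl fun b hb => ?_
      have hd : ∀ i ∈ Φ.scope b, T.piecewise y x i = x i := fun i hi =>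
        Finset.piecewise_eq_of_notMem _ _ _ fun hiT => (hpeel i hiT).2 b hb hi
      congr 1
      · unfold psi
        congr 1
        exact Finset.prod_congr rfl fun i hi => by rw [hd i hi]
      · exact Finset.prod_congr rfl fun i hi => by rw [hd i hi]
    · refine Finset.prod_congr rfl fun i hi => ?_
      rw [Finset.piecewise_eq_of_notMem _ _ _ (Finset.mem_compl.1 hi)]
  · intro x
    exact Φ.clause_sum k hk2 hk h u H a p hp x
  · intro x
    simp only [g2, c2]
    rw [← sum_prod T (fun j v => Real.exp (Φ.field u j * sg true v))]
    refine Finset.sum_congr rfl fun y _ => Finset.prod_congr rfl fun j hj => ?_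
    rw [Finset.piecewise_eq_of_mem _ _ _ hj]

lemma wt_all [Fintype V] [Fintype A] [DecidableEq V] [DecidableEq A] (Φ : KSAT V A) (k : ℕ)
    (hk2 : 2 ≤ k) (hk : ∀ a : A, (Φ.scope a).card = k) (ht : Φ.factorGraph.IsTree)
    (h : V → A → ℝ) (u : A → V → ℝ) (H : Φ.IsBPFixedPoint k h u) (r : V) (n : ℕ) :
    ∀ B : Finset A, B.card = n →
    ∃ c : ℝ, ∀ v : Bool, ∑ x : V → Bool, (if x r = v then 1 else 0) * Φ.wt u B x =
      c * Real.exp (Φ.field u r * sg true v) := by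
  induction n with
  | zero =>
    intro B hB
    rw [Finset.card_eq_zero] at hB
    subst hB
    refine ⟨∏ j ∈ Finset.univ.erase r, (Real.exp (Φ.field u j * sg true true)
      + Real.exp (Φ.field u j * sg true false)), fun v => ?_⟩
    have e : ∀ x : V → Bool, (if x r = v then 1 else 0) * Φ.wt u ∅ x =
        ∏ j ∈ Finset.univ, (fun j w => (if j = r then (if w = v then (1:ℝ) else 0) else 1) *
          Real.exp (Φ.field u j * sg true w)) j (x j) := by
      intro x
      simp only [wt, Finset.prod_empty, one_mul, Finset.prod_mul_distrib]
      congr 1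
      rw [Finset.prod_ite_eq' Finset.univ r (fun j => if x j = v then (1:ℝ) else 0)]
      simp
    rw [Finset.sum_congr rfl fun x _ => e x,
      sum_prod Finset.univ (fun j w => (if j = r then (if w = v then (1:ℝ) else 0) else 1) *
          Real.exp (Φ.field u j * sg true w)), ← Finset.mul_prod_erase _ _ (Finset.mem_univ r), Finset.compl_univ,
      Finset.card_empty, pow_zero, one_mul, mul_comm]
    congr 1
    · refine Finset.prod_congr rfl fun j hj => ?_
      simp [Finset.ne_of_mem_erase hj]
    · cases v <;> simp
  | succ n ih =>
    intro B hB
    obtain ⟨a, haB, p, hp, hj⟩ := Φ.peel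
      (fun a => by rw [← Finset.card_pos, hk a]; omega) ht r B
      (by rw [← Finset.card_pos]; omega)
    obtain ⟨c, hc⟩ := Φ.wt_peel k hk2 hk h u H r B a haB p hp hj
    obtain ⟨c', hc'⟩ := ih (B.erase a) (by rw [Finset.card_erase_of_mem haB]; omega)
    exact ⟨c * c', fun v => by rw [hc, hc', mul_assoc]⟩

lemma marg [Fintype V] [Fintype A] [DecidableEq V] [DecidableEq A] (Φ : KSAT V A) (k : ℕ)
    (hk2 : 2 ≤ k) (hk : ∀ a : A, (Φ.scope a).card = k) (ht : Φ.factorGraph.IsTree)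
    (hsat : (Φ.solutions).Nonempty)
    (h : V → A → ℝ) (u : A → V → ℝ) (H : Φ.IsBPFixedPoint k h u) (r : V) (v : Bool) :
    Φ.bpMarginal u r v =
      ((Φ.solutions.filter fun y => y r = v).card : ℝ) / (Φ.solutions.card : ℝ) := by
  obtain ⟨c, hc⟩ := Φ.wt_all k hk2 hk ht h u H r _ Finset.univ rfl
  have e : ∀ v : Bool, ((Φ.solutions.filter fun y => y r = v).card : ℝ) =
      c * Real.exp (Φ.field u r * sg true v) := by
    intro v
    rw [← hc v, solutions, Finset.filter_filter, Finset.card_filter]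
    push_cast
    refine Finset.sum_congr rfl fun x _ => ?_
    rw [wt_univ]
    by_cases h1 : Φ.IsSolution x <;> by_cases h2 : x r = v <;> simp [h1, h2]
  have tot : (Φ.solutions.card : ℝ) =
      ((Φ.solutions.filter fun y => y r = true).card : ℝ) +
      ((Φ.solutions.filter fun y => y r = false).card : ℝ) := by
    rw [← Finset.card_filter_add_card_filter_not (s := Φ.solutions) (fun y => y r = true)]
    simp
  have hpos : 0 < (Φ.solutions.card : ℝ) := by exact_mod_cast hsat.card_pos
  rw [e v]
  rw [e, e, ← mul_add] at tot
  have hc0 : c ≠ 0 := by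
    rintro rfl
    rw [zero_mul] at tot
    exact hpos.ne' tot
  rw [tot, mul_div_mul_left _ _ hc0]
  have t1 := tanh_half (Φ.field u r)
  have t2 := tanh_half (-(Φ.field u r))
  rw [Real.tanh_neg, sub_neg_eq_add, neg_neg] at t2
  unfold bpMarginal
  cases v
  · simp [t2, sg]
  · simp [t1, sg, add_comm]

end KSAT

/-- on a tree factor graph with a nonempty solution set, the BP
fixed point equations have a unique solution (the messages on the directed
edges are uniquely determined), and the BP marginals computed from it are the
true marginals of the uniform measure over solutions. -/
theorem bp_exact_on_trees
    {V A : Type} [Fintype V] [Fintype A] [DecidableEq V] [DecidableEq A]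
    (k : ℕ) (hk2 : 2 ≤ k) (Φ : KSAT V A) (hk : ∀ a : A, (Φ.scope a).card = k)
    (htree : Φ.factorGraph.IsTree) (hsat : (Φ.solutions).Nonempty) :
    (∃ (h : V → A → ℝ) (u : A → V → ℝ), Φ.IsBPFixedPoint k h u) ∧
    (∀ (h h' : V → A → ℝ) (u u' : A → V → ℝ),
      Φ.IsBPFixedPoint k h u → Φ.IsBPFixedPoint k h' u' →
      ∀ a : A, ∀ i ∈ Φ.scope a, h i a = h' i a ∧ u a i = u' a i) ∧
    (∀ (h : V → A → ℝ) (u : A → V → ℝ), Φ.IsBPFixedPoint k h u →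
      ∀ (i : V) (v : Bool),
        Φ.bpMarginal u i v =
          ((Φ.solutions.filter fun y => y i = v).card : ℝ) / (Φ.solutions.card : ℝ)) := by
  exact ⟨Φ.exists_fp k htree, fun h h' u u' H H' => Φ.unique_fp k htree h h' u u' H H',
    fun h u H i v => Φ.marg k hk2 hk htree hsat h u H i v⟩
end

section
/- Let F be a k-SAT formula with k≥2 whose factor graph is a tree, μ the uniform distribution over its solutions, and {h_{i→a},u_{a→i}} the unique BP fixed point. Let a∈F, i∈∂a, and v∈{0,1} with v≠z(i,a) and μ(x_i=v)>0. Then the conditional probability under μ, given x_i=v, that x_j=z(j,a) for every j∈∂a∖{i} equals ∏_{j∈∂a∖{i}} (1−tanh h_{j→a})/2. -/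
open scoped Classical

namespace BPAux

lemma mem_nbr {V A : Type} [Fintype A] (Φ : KSAT V A) (j : V) (c : A) :
    c ∈ Φ.nbr j ↔ j ∈ Φ.scope c := by
  simp [KSAT.nbr]

lemma single {V : Type} [Fintype V] [DecidableEq V] (W : (V → Bool) → ℝ) (j : V) (z : Bool) (q : ℝ)
    (hW : ∀ x : V → Bool, x j = z → (1 - q) * W x = q * W (Function.update x j (!z))) :
    ∑ x, (if x j = z then W x else 0) = q * ∑ x, W x := by
  have hinv : Function.Involutive (fun x : V → Bool => Function.update x j (!(x j))) := by
    intro x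
    simp
  have h1 : ∑ x, (if x j = z then 0 else W x)
      = ∑ x : V → Bool, (if x j = z then W (Function.update x j (!z)) else 0) := by
    rw [← Equiv.sum_comp hinv.toPerm]
    refine Finset.sum_congr rfl fun x _ => ?_
    simp only [Function.Involutive.coe_toPerm, Function.update_self]
    by_cases hx : x j = z
    · simp [hx]
    · have : (!(x j)) = z := by
        cases h1 : x j <;> cases h2 : z <;> simp_all
      simp [hx, this]
  have h2 : ∑ x, W x = ∑ x, (if x j = z then W x else 0) + ∑ x, (if x j = z then 0 else W x) := by
    rw [← Finset.sum_add_distrib]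
    refine Finset.sum_congr rfl fun x _ => ?_
    split_ifs <;> simp
  have h3 : q * ∑ x : V → Bool, (if x j = z then W (Function.update x j (!z)) else 0)
      = (1 - q) * ∑ x, (if x j = z then W x else 0) := by
    rw [Finset.mul_sum, Finset.mul_sum]
    refine Finset.sum_congr rfl fun x _ => ?_
    by_cases hx : x j = z
    · simp only [hx, if_true]; exact (hW x hx).symm
    · simp [hx]
  rw [h2, mul_add, h1, h3]; ring

lemma multi {V : Type} [Fintype V] [DecidableEq V] (z : V → Bool) (q : V → ℝ) (L : Finset V) :
    ∀ (W : (V → Bool) → ℝ)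
    (_ : ∀ j ∈ L, ∀ x : V → Bool, x j = z j →
      (1 - q j) * W x = q j * W (Function.update x j (!(z j)))),
    ∑ x, (if ∀ j ∈ L, x j = z j then W x else 0) = (∏ j ∈ L, q j) * ∑ x, W x := by
  induction L using Finset.induction_on with
  | empty => intro W _; simp
  | insert i L hi ih =>
    intro W hW
    have h1 := ih (fun x => if x i = z i then W x else 0) (by
      intro j hj x hx
      have hne : i ≠ j := fun e => hi (e ▸ hj)
      simp only [Function.update_of_ne hne]
      by_cases hxi : x i = z i
      · simp only [hxi, if_true]; exact hW j (Finset.mem_insert_of_mem hj) x hx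
      · simp [hxi])
    rw [single W i (z i) (q i) (hW i (Finset.mem_insert_self _ _))] at h1
    rw [Finset.prod_insert hi]
    calc _ = _ := ?_
      _ = _ := h1
      _ = _ := by ring
    refine Finset.sum_congr rfl fun x _ => ?_
    simp only [Finset.forall_mem_insert]
    by_cases h1 : x i = z i <;> by_cases h2 : ∀ j ∈ L, x j = z j <;> simp [h1, h2]

lemma parent_unique {W : Type} {G : SimpleGraph W} (hG : G.IsTree) (r v w₁ w₂ : W)
    (h₁ : G.Adj w₁ v) (h₂ : G.Adj w₂ v) (d₁ : G.dist r w₁ + 1 = G.dist r v)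
    (d₂ : G.dist r w₂ + 1 = G.dist r v) : w₁ = w₂ := by
  obtain ⟨p, hp⟩ := hG.connected.exists_walk_length_eq_dist r w₁
  obtain ⟨p', hp'⟩ := hG.connected.exists_walk_length_eq_dist r w₂
  have a1 : (p.concat h₁).IsPath := SimpleGraph.Walk.isPath_of_length_eq_dist _ (by simp; omega)
  have a2 : (p'.concat h₂).IsPath := SimpleGraph.Walk.isPath_of_length_eq_dist _ (by simp; omega)
  have := (hG.existsUnique_path r v).unique a1 a2
  have := congrArg SimpleGraph.Walk.penultimate this
  simpa using this

lemma exists_parent {W : Type} {G : SimpleGraph W} (hG : G.IsTree) (r v : W) (hv : v ≠ r) :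
    ∃ w, G.Adj w v ∧ G.dist r w + 1 = G.dist r v := by
  obtain ⟨p, hp⟩ := hG.connected.exists_walk_length_eq_dist r v
  have hn : ¬ p.Nil := fun h => hv h.eq.symm
  refine ⟨p.penultimate, p.adj_penultimate hn, ?_⟩
  have hadj := p.adj_penultimate hn
  have h1 : G.dist r p.penultimate ≤ p.length - 1 := by
    have := SimpleGraph.dist_le p.dropLast
    simpa using this
  have h2 := hG.dist_eq_dist_add_one_of_adj r hadj
  omega

lemma adj_iff {V A : Type} (Φ : KSAT V A) (i : V) (a : A) :
    Φ.factorGraph.Adj (Sum.inl i) (Sum.inr a) ↔ i ∈ Φ.scope a := by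
  simp [KSAT.factorGraph]

lemma adj_inr {V A : Type} (Φ : KSAT V A) (w : V ⊕ A) (a : A)
    (h : Φ.factorGraph.Adj w (Sum.inr a)) : ∃ i, w = Sum.inl i ∧ i ∈ Φ.scope a := by
  cases w with
  | inl i => exact ⟨i, rfl, (adj_iff Φ i a).1 h⟩
  | inr b => simp [KSAT.factorGraph] at h

lemma rooted {V A : Type} (Φ : KSAT V A) (htree : Φ.factorGraph.IsTree) (a : A) (i : V)
    (hia : i ∈ Φ.scope a) :
    ∃ (D : A → ℕ) (p : A → V), p a = i ∧ (∀ b, D a ≤ D b) ∧ (∀ b, p b ∈ Φ.scope b) ∧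
      ∀ b, ∀ j ∈ Φ.scope b, j ≠ p b → ∀ c, c ≠ b → j ∈ Φ.scope c → p c = j ∧ D b < D c := by
  have hp : ∀ b : A, ∃ j, j ∈ Φ.scope b ∧ Φ.factorGraph.dist (Sum.inl i) (Sum.inl j) + 1
      = Φ.factorGraph.dist (Sum.inl i) (Sum.inr b) := by
    intro b
    obtain ⟨w, hw, hd⟩ := exists_parent htree (Sum.inl i) (Sum.inr b) (by simp)
    obtain ⟨j, rfl, hj⟩ := adj_inr Φ w b hw
    exact ⟨j, hj, hd⟩
  choose p hp1 hp2 using hp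
  have key : ∀ b, ∀ j ∈ Φ.scope b, j ≠ p b → Φ.factorGraph.dist (Sum.inl i) (Sum.inl j)
      = Φ.factorGraph.dist (Sum.inl i) (Sum.inr b) + 1 := by
    intro b j hj hne
    rcases htree.dist_eq_dist_add_one_of_adj (Sum.inl i) ((adj_iff Φ j b).2 hj) with h | h
    · exact h
    · exfalso
      have := parent_unique htree (Sum.inl i) (Sum.inr b) (Sum.inl j) (Sum.inl (p b))
        ((adj_iff Φ j b).2 hj) ((adj_iff Φ _ b).2 (hp1 b)) h.symm (hp2 b)
      exact hne (Sum.inl.inj this)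
  have hpa : p a = i := by
    by_contra hne
    have := key a i hia (Ne.symm hne)
    simp at this
  refine ⟨fun b => Φ.factorGraph.dist (Sum.inl i) (Sum.inr b), p, hpa, ?_, hp1, ?_⟩
  · intro b
    have h1 := hp2 a
    have h2 := hp2 b
    rw [hpa] at h1
    simp at h1
    simp only
    omega
  · intro b j hj hne c hcb hjc
    have h1 := key b j hj hne
    have h2 : j = p c := by
      by_contra hne'
      have h3 := key c j hjc hne'
      have := parent_unique htree (Sum.inl i) (Sum.inl j) (Sum.inr b) (Sum.inr c)
        ((adj_iff Φ j b).2 hj).symm ((adj_iff Φ j c).2 hjc).symm h1.symm h3.symm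
      exact hcb (Sum.inr.inj this).symm
    refine ⟨h2.symm, ?_⟩
    have h4 := hp2 c
    rw [← h2] at h4
    simp only
    omega

/-- The message of clause `c` to its parent, as a function of the assignment. -/
noncomputable def msg {V A : Type} (Φ : KSAT V A) (u : A → V → ℝ) (p : A → V) (c : A)
    (x : V → Bool) : ℝ :=
  if x (p c) = Φ.z c (p c) then Real.exp (-2 * u c (p c)) else 1

/-- Indicator that clause `c` is satisfied. -/
noncomputable def ind {V A : Type} (Φ : KSAT V A) (c : A) (x : V → Bool) : ℝ :=
  if ∀ j ∈ Φ.scope c, x j = Φ.z c j then 0 else 1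

lemma tanh_id (t : ℝ) : (1 + Real.tanh t) * Real.exp (-t) = (1 - Real.tanh t) * Real.exp t := by
  have := Real.cosh_pos t
  rw [Real.tanh_eq_sinh_div_cosh]
  field_simp
  rw [Real.cosh_add_sinh, Real.cosh_sub_sinh, ]
  ring

lemma tanh_bd (t : ℝ) : 0 < (1 - Real.tanh t) / 2 ∧ (1 - Real.tanh t) / 2 < 1 := by
  have h1 := Real.tanh_lt_one t
  have h2 := Real.neg_one_lt_tanh t
  constructor <;> linarith

lemma prod_lt_one {V : Type} (L : Finset V) (hL : L.Nonempty) (q : V → ℝ)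
    (hq : ∀ j, 0 < q j ∧ q j < 1) : ∏ j ∈ L, q j < 1 := by
  have := Finset.prod_lt_prod_of_nonempty (s := L) (f := q) (g := fun _ => 1)
    (fun j _ => (hq j).1) (fun j _ => (hq j).2) hL
  simpa using this

lemma exp_u {V A : Type} [Fintype A] [DecidableEq V] [DecidableEq A]
    (k : ℕ) (hk2 : 2 ≤ k) (Φ : KSAT V A) (hk : ∀ a : A, (Φ.scope a).card = k)
    (h : V → A → ℝ) (u : A → V → ℝ) (hbp : Φ.IsBPFixedPoint k h u)
    (a : A) (i : V) (hia : i ∈ Φ.scope a) :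
    Real.exp (-2 * u a i) = 1 - ∏ j ∈ (Φ.scope a).erase i, (1 - Real.tanh (h j a)) / 2 := by
  have hc : ((Φ.scope a).erase i).card = k - 1 := by rw [Finset.card_erase_of_mem hia, hk]
  have hne : ((Φ.scope a).erase i).Nonempty := by
    rw [← Finset.card_pos]; omega
  have hlt := prod_lt_one _ hne (fun j => (1 - Real.tanh (h j a)) / 2) (fun j => tanh_bd _)
  rw [(hbp a i hia).2, KSAT.bpUval, ← hc, ← Finset.prod_const, ← Finset.prod_div_distrib]
  rw [← mul_assoc]
  rw [show (-2 : ℝ) * -(1 / 2) = 1 by norm_num, one_mul, Real.exp_log]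
  linarith

lemma ratio {V A : Type} [Fintype A] [DecidableEq V] [DecidableEq A]
    (k : ℕ) (Φ : KSAT V A)
    (h : V → A → ℝ) (u : A → V → ℝ) (hbp : Φ.IsBPFixedPoint k h u)
    (p : A → V) (hp : ∀ b, p b ∈ Φ.scope b) (b : A) (j : V) (hj : j ∈ Φ.scope b)
    (T : Finset A) (hbT : b ∉ T) (hT : (Φ.nbr j).erase b ⊆ T)
    (hpj : ∀ c ∈ (Φ.nbr j).erase b, p c = j) (x : V → Bool) (hx : x j = Φ.z b j) :
    (1 - (1 - Real.tanh (h j b)) / 2) * ∏ c ∈ T, msg Φ u p c x =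
    (1 - Real.tanh (h j b)) / 2 *
      ∏ c ∈ T, msg Φ u p c (Function.update x j (!(Φ.z b j))) := by
  rw [← Finset.prod_sdiff hT, ← Finset.prod_sdiff hT]
  have e1 : ∏ c ∈ T \ (Φ.nbr j).erase b, msg Φ u p c (Function.update x j (!(Φ.z b j)))
      = ∏ c ∈ T \ (Φ.nbr j).erase b, msg Φ u p c x := by
    refine Finset.prod_congr rfl fun c hc => ?_
    have hne : p c ≠ j := by
      intro e
      simp only [Finset.mem_sdiff, Finset.mem_erase, KSAT.nbr, Finset.mem_filter,
        Finset.mem_univ, true_and, not_and] at hc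
      exact hc.2 (fun e' => hbT (e' ▸ hc.1)) (e ▸ hp c)
    simp only [msg, Function.update_of_ne hne]
  have e2 : ∏ c ∈ (Φ.nbr j).erase b, msg Φ u p c x
      = Real.exp (-2 * ∑ c ∈ Φ.agree j b, u c j) := by
    rw [Finset.mul_sum, Real.exp_sum, KSAT.agree, Finset.prod_filter]
    refine Finset.prod_congr rfl fun c hc => ?_
    simp only [msg, hpj c hc, hx, eq_comm]
  have e3 : ∏ c ∈ (Φ.nbr j).erase b, msg Φ u p c (Function.update x j (!(Φ.z b j)))
      = Real.exp (-2 * ∑ c ∈ Φ.disag j b, u c j) := by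
    rw [Finset.mul_sum, Real.exp_sum, KSAT.disag, Finset.prod_filter]
    refine Finset.prod_congr rfl fun c hc => ?_
    simp only [msg, hpj c hc, Function.update_self, eq_comm]
  rw [e1, e2, e3]
  have hh := (hbp b j hj).1
  set X := ∑ c ∈ Φ.agree j b, u c j
  set Y := ∑ c ∈ Φ.disag j b, u c j
  have t := tanh_id (h j b)
  have f1 : Real.exp (-2 * X) = Real.exp (-(X + Y)) * Real.exp (-(h j b)) := by
    rw [← Real.exp_add, hh]; ring_nf
  have f2 : Real.exp (-2 * Y) = Real.exp (-(X + Y)) * Real.exp (h j b) := by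
    rw [← Real.exp_add, hh]; ring_nf
  rw [f1, f2]
  linear_combination (∏ c ∈ T \ (Φ.nbr j).erase b, msg Φ u p c x) * Real.exp (-(X + Y)) / 2 * t

/-- The general averaging statement at a clause `b`. -/
lemma average {V A : Type} [Fintype V] [Fintype A] [DecidableEq V] [DecidableEq A]
    (k : ℕ) (Φ : KSAT V A)
    (h : V → A → ℝ) (u : A → V → ℝ) (hbp : Φ.IsBPFixedPoint k h u)
    (p : A → V) (hp : ∀ b, p b ∈ Φ.scope b) (b : A)
    (T : Finset A) (hbT : b ∉ T)
    (hT : ∀ j ∈ (Φ.scope b).erase (p b), (Φ.nbr j).erase b ⊆ T)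
    (hpj : ∀ j ∈ (Φ.scope b).erase (p b), ∀ c ∈ (Φ.nbr j).erase b, p c = j)
    (G : (V → Bool) → ℝ)
    (hG : ∀ j ∈ (Φ.scope b).erase (p b), ∀ x v, G (Function.update x j v) = G x) :
    ∑ x, (if ∀ j ∈ (Φ.scope b).erase (p b), x j = Φ.z b j
      then G x * ∏ c ∈ T, msg Φ u p c x else 0)
    = (∏ j ∈ (Φ.scope b).erase (p b), (1 - Real.tanh (h j b)) / 2) *
      ∑ x, G x * ∏ c ∈ T, msg Φ u p c x := by
  apply multi (Φ.z b) (fun j => (1 - Real.tanh (h j b)) / 2)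
  intro j hj x hx
  have := ratio k Φ h u hbp p hp b j (Finset.mem_of_mem_erase hj) T hbT (hT j hj) (hpj j hj) x hx
  simp only [hG j hj]
  linear_combination G x * this

lemma step {V A : Type} [Fintype V] [Fintype A] [DecidableEq V] [DecidableEq A]
    (k : ℕ) (hk2 : 2 ≤ k) (Φ : KSAT V A) (hk : ∀ a : A, (Φ.scope a).card = k)
    (h : V → A → ℝ) (u : A → V → ℝ) (hbp : Φ.IsBPFixedPoint k h u)
    (p : A → V) (hp : ∀ b, p b ∈ Φ.scope b) (b : A)
    (T : Finset A) (hbT : b ∉ T)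
    (hT : ∀ j ∈ (Φ.scope b).erase (p b), (Φ.nbr j).erase b ⊆ T)
    (hpj : ∀ j ∈ (Φ.scope b).erase (p b), ∀ c ∈ (Φ.nbr j).erase b, p c = j)
    (G : (V → Bool) → ℝ)
    (hG : ∀ j ∈ (Φ.scope b).erase (p b), ∀ x v, G (Function.update x j v) = G x) :
    ∑ x, G x * ind Φ b x * ∏ c ∈ T, msg Φ u p c x
    = ∑ x, G x * msg Φ u p b x * ∏ c ∈ T, msg Φ u p c x := by
  have key := average k Φ h u hbp p hp b T hbT hT hpj
    (fun x => if x (p b) = Φ.z b (p b) then G x else 0) (by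
      intro j hj x v
      simp only [hG j hj, Function.update_of_ne (Finset.ne_of_mem_erase hj).symm])
  have hu := exp_u k hk2 Φ hk h u hbp b (p b) (hp b)
  set P := ∏ j ∈ (Φ.scope b).erase (p b), (1 - Real.tanh (h j b)) / 2
  have h1 : ∀ x, G x * ind Φ b x * ∏ c ∈ T, msg Φ u p c x = G x * ∏ c ∈ T, msg Φ u p c x -
      (if ∀ j ∈ (Φ.scope b).erase (p b), x j = Φ.z b j
      then (if x (p b) = Φ.z b (p b) then G x else 0) * ∏ c ∈ T, msg Φ u p c x else 0) := by
    intro x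
    have : (∀ j ∈ Φ.scope b, x j = Φ.z b j) ↔ (∀ j ∈ (Φ.scope b).erase (p b), x j = Φ.z b j) ∧
        x (p b) = Φ.z b (p b) := by
      conv_lhs => rw [← Finset.insert_erase (hp b)]
      rw [Finset.forall_mem_insert, and_comm]
    simp only [ind, this]
    by_cases c1 : ∀ j ∈ (Φ.scope b).erase (p b), x j = Φ.z b j
    · by_cases c2 : x (p b) = Φ.z b (p b)
      · rw [if_pos ⟨c1, c2⟩, if_pos c1, if_pos c2]; ring
      · rw [if_neg (fun e => c2 e.2), if_pos c1, if_neg c2]; ring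
    · rw [if_neg (fun e => c1 e.1), if_neg c1]; ring
  have h2 : ∀ x, G x * msg Φ u p b x * ∏ c ∈ T, msg Φ u p c x = G x * ∏ c ∈ T, msg Φ u p c x -
      P * ((if x (p b) = Φ.z b (p b) then G x else 0) * ∏ c ∈ T, msg Φ u p c x) := by
    intro x
    rw [msg, hu]
    split_ifs <;> ring
  simp only [h1, h2, Finset.sum_sub_distrib]
  rw [key, Finset.mul_sum]

lemma elim {V A : Type} [Fintype V] [Fintype A] [DecidableEq V] [DecidableEq A]
    (k : ℕ) (hk2 : 2 ≤ k) (Φ : KSAT V A) (hk : ∀ a : A, (Φ.scope a).card = k)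
    (h : V → A → ℝ) (u : A → V → ℝ) (hbp : Φ.IsBPFixedPoint k h u)
    (D : A → ℕ) (p : A → V) (hp : ∀ b, p b ∈ Φ.scope b) (a : A) (hDa : ∀ b, D a ≤ D b)
    (hD : ∀ b, ∀ j ∈ Φ.scope b, j ≠ p b → ∀ c, c ≠ b → j ∈ Φ.scope c → p c = j ∧ D b < D c)
    (φ : (V → Bool) → ℝ)
    (hφ : ∀ j, j ∉ Φ.scope a → ∀ x v, φ (Function.update x j v) = φ x) (n : ℕ) :
    ∀ S : Finset A, S.card = n → a ∉ S → (∀ b ∈ S, ∀ c, c ≠ a → c ∉ S → D b ≤ D c) →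
    ∑ x, φ x * ind Φ a x * (∏ c ∈ S, ind Φ c x) * ∏ c ∈ Finset.univ \ insert a S, msg Φ u p c x
    = ∑ x, φ x * ind Φ a x * ∏ c ∈ Finset.univ \ {a}, msg Φ u p c x := by
  induction n with
  | zero =>
    intro S hS _ _
    rw [Finset.card_eq_zero] at hS
    subst hS
    simp
  | succ n ih =>
    intro S hS haS hlow
    have hne : S.Nonempty := by rw [← Finset.card_pos]; omega
    obtain ⟨b, hbS, hmax⟩ := S.exists_max_image D hne
    have hba : b ≠ a := fun e => haS (e ▸ hbS)
    have hout : ∀ j ∈ (Φ.scope b).erase (p b), ∀ c, c ≠ b → j ∈ Φ.scope c → c ∉ insert a S := by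
      intro j hj c hcb hjc hc
      have h1 := (hD b j (Finset.mem_of_mem_erase hj) (Finset.ne_of_mem_erase hj) c hcb hjc).2
      rcases Finset.mem_insert.1 hc with rfl | hc
      · have := hDa b; omega
      · have := hmax c hc; omega
    rw [← ih (S.erase b) (by rw [Finset.card_erase_of_mem hbS]; omega)
      (fun e => haS (Finset.mem_of_mem_erase e)) (by
        intro b' hb' c hca hc
        by_cases hcS : c ∈ S
        · have : c = b := by
            by_contra hcb
            exact hc (Finset.mem_erase.2 ⟨hcb, hcS⟩)
          rw [this]; exact hmax b' (Finset.mem_of_mem_erase hb')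
        · exact hlow b' (Finset.mem_of_mem_erase hb') c hca hcS)]
    have hins : Finset.univ \ insert a (S.erase b) = insert b (Finset.univ \ insert a S) := by
      ext c
      simp only [Finset.mem_sdiff, Finset.mem_univ, true_and, Finset.mem_insert, Finset.mem_erase]
      by_cases hcb : c = b
      · subst hcb; simp [hba]
      · simp [hcb]
    have hbn : b ∉ Finset.univ \ insert a S := by simp [hbS]
    have := step k hk2 Φ hk h u hbp p hp b (Finset.univ \ insert a S) hbn
      (by
        intro j hj c hc
        rw [Finset.mem_erase, mem_nbr] at hc
        simpa using hout j hj c hc.1 hc.2)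
      (by
        intro j hj c hc
        rw [Finset.mem_erase, mem_nbr] at hc
        exact (hD b j (Finset.mem_of_mem_erase hj) (Finset.ne_of_mem_erase hj) c hc.1 hc.2).1)
      (fun x => φ x * ind Φ a x * ∏ c ∈ S.erase b, ind Φ c x)
      (by
        intro j hj x v
        have hi : ∀ c ∈ insert a S, c ≠ b → ind Φ c (Function.update x j v) = ind Φ c x := by
          intro c hc hcb
          have hjc : j ∉ Φ.scope c := fun e => hout j hj c hcb e hc
          have : (∀ l ∈ Φ.scope c, Function.update x j v l = Φ.z c l) ↔
              (∀ l ∈ Φ.scope c, x l = Φ.z c l) := by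
            refine forall₂_congr fun l hl => ?_
            have hlj : l ≠ j := by rintro rfl; exact hjc hl
            rw [Function.update_of_ne hlj]
          unfold ind
          congr 1
          exact propext this
        have hja : j ∉ Φ.scope a :=
          fun e => hout j hj a hba.symm e (Finset.mem_insert_self _ _)
        rw [hφ j hja, hi a (Finset.mem_insert_self _ _) hba.symm]
        congr 1
        refine Finset.prod_congr rfl fun c hc => ?_
        exact hi c (Finset.mem_insert_of_mem (Finset.mem_of_mem_erase hc))
          (Finset.ne_of_mem_erase hc))
    rw [hins]
    calc _ = _ := ?_
      _ = _ := this
      _ = _ := ?_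
    · refine Finset.sum_congr rfl fun x _ => ?_
      rw [← Finset.mul_prod_erase S _ hbS]; ring
    · refine Finset.sum_congr rfl fun x _ => ?_
      rw [Finset.prod_insert hbn]; ring

lemma ind_sol {V A : Type} [Fintype V] [Fintype A] [DecidableEq V] [DecidableEq A]
    (Φ : KSAT V A) (a : A) (x : V → Bool) :
    ind Φ a x * (∏ c ∈ Finset.univ.erase a, ind Φ c x) = if Φ.IsSolution x then 1 else 0 := by
  rw [Finset.mul_prod_erase _ (fun c => ind Φ c x) (Finset.mem_univ a)]
  have : ∀ c, ind Φ c x = if Φ.Satisfies x c then 1 else 0 := by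
    intro c
    have : Φ.Satisfies x c ↔ ¬ ∀ j ∈ Φ.scope c, x j = Φ.z c j := by
      simp [KSAT.Satisfies]
    rw [ind]
    simp only [this]
    split_ifs <;> rfl
  simp only [this, KSAT.IsSolution]
  rw [Finset.prod_ite_zero]
  by_cases hs : ∀ c, Φ.Satisfies x c <;> simp [hs]

lemma count {V A : Type} [Fintype V] [Fintype A] [DecidableEq V] [DecidableEq A]
    (k : ℕ) (hk2 : 2 ≤ k) (Φ : KSAT V A) (hk : ∀ a : A, (Φ.scope a).card = k)
    (h : V → A → ℝ) (u : A → V → ℝ) (hbp : Φ.IsBPFixedPoint k h u)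
    (D : A → ℕ) (p : A → V) (hp : ∀ b, p b ∈ Φ.scope b) (a : A) (hDa : ∀ b, D a ≤ D b)
    (hD : ∀ b, ∀ j ∈ Φ.scope b, j ≠ p b → ∀ c, c ≠ b → j ∈ Φ.scope c → p c = j ∧ D b < D c)
    (Q : (V → Bool) → Prop) [DecidablePred Q]
    (hQ : ∀ j, j ∉ Φ.scope a → ∀ x v, Q (Function.update x j v) ↔ Q x)
    (hQa : ∀ x, Q x → ∃ j ∈ Φ.scope a, x j ≠ Φ.z a j) :
    ((Φ.solutions.filter Q).card : ℝ) =
      ∑ x, (if Q x then 1 else 0) * ∏ c ∈ Finset.univ \ {a}, msg Φ u p c x := by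
  have := elim k hk2 Φ hk h u hbp D p hp a hDa hD (fun x => if Q x then 1 else 0)
    (by intro j hj x v; simp only [hQ j hj]) _ (Finset.univ.erase a) rfl (by simp)
    (by intro b _ c hca hc; exact absurd (Finset.mem_erase.2 ⟨hca, Finset.mem_univ _⟩) hc)
  calc _ = _ := ?_
    _ = _ := this
    _ = _ := ?_
  · rw [KSAT.solutions, Finset.filter_filter, Finset.card_filter]
    push_cast
    refine Finset.sum_congr rfl fun x _ => ?_
    rw [mul_assoc (if Q x then (1:ℝ) else 0), ind_sol]
    by_cases h1 : Q x <;> by_cases h2 : Φ.IsSolution x <;> simp [h1, h2]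
  · refine Finset.sum_congr rfl fun x _ => ?_
    by_cases h1 : Q x
    · obtain ⟨j, hj, hne⟩ := hQa x h1
      have : ind Φ a x = 1 := if_neg (fun e => hne (e j hj))
      rw [this, mul_one]
    · simp [h1]

end BPAux

/-- on a tree factor graph, for a clause `a`, a variable
`i ∈ ∂a` and a value `v ≠ z(i,a)` of positive probability, the conditional
probability under the uniform measure over solutions, given `x_i = v`, that
all the other variables of `a` take their unsatisfying values equals
`∏_{j ∈ ∂a∖i} (1 - tanh h_{j→a})/2`. -/
theorem bp_conditional_unsat_probability
    {V A : Type} [Fintype V] [Fintype A] [DecidableEq V] [DecidableEq A]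
    (k : ℕ) (hk2 : 2 ≤ k) (Φ : KSAT V A) (hk : ∀ a : A, (Φ.scope a).card = k)
    (htree : Φ.factorGraph.IsTree) (hsat : (Φ.solutions).Nonempty)
    (h : V → A → ℝ) (u : A → V → ℝ) (hbp : Φ.IsBPFixedPoint k h u)
    (a : A) (i : V) (hia : i ∈ Φ.scope a) (v : Bool) (hv : v ≠ Φ.z a i)
    (hpos : 0 < (Φ.solutions.filter fun y => y i = v).card) :
    ((Φ.solutions.filter fun y =>
        y i = v ∧ ∀ j ∈ (Φ.scope a).erase i, y j = Φ.z a j).card : ℝ) /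
      ((Φ.solutions.filter fun y => y i = v).card : ℝ) =
    ∏ j ∈ (Φ.scope a).erase i, (1 - Real.tanh (h j a)) / 2 := by
  obtain ⟨D, p, hpa, hDa, hp, hD⟩ := BPAux.rooted Φ htree a i hia
  have h0 := BPAux.count k hk2 Φ hk h u hbp D p hp a hDa hD (fun y => y i = v)
    (by
      intro j hj x w
      have hij : i ≠ j := by rintro rfl; exact hj hia
      rw [Function.update_of_ne hij])
    (fun x hx => ⟨i, hia, hx ▸ hv⟩)
  have h1 := BPAux.count k hk2 Φ hk h u hbp D p hp a hDa hD
    (fun y => y i = v ∧ ∀ j ∈ (Φ.scope a).erase i, y j = Φ.z a j)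
    (by
      intro j hj x w
      have hij : i ≠ j := by rintro rfl; exact hj hia
      rw [Function.update_of_ne hij]
      refine and_congr Iff.rfl (forall₂_congr fun l hl => ?_)
      have hlj : l ≠ j := by rintro rfl; exact hj (Finset.mem_of_mem_erase hl)
      rw [Function.update_of_ne hlj])
    (fun x hx => ⟨i, hia, hx.1 ▸ hv⟩)
  have key := BPAux.average k Φ h u hbp p hp a (Finset.univ \ {a}) (by simp)
    (by
      intro j hj c hc
      simpa using Finset.ne_of_mem_erase hc)
    (by
      intro j hj c hc
      rw [Finset.mem_erase, BPAux.mem_nbr] at hc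
      exact (hD a j (Finset.mem_of_mem_erase hj) (Finset.ne_of_mem_erase hj) c hc.1 hc.2).1)
    (fun x => if x i = v then 1 else 0)
    (by
      intro j hj x w
      rw [hpa] at hj
      simp only [Function.update_of_ne (Finset.ne_of_mem_erase hj).symm])
  rw [hpa, ← h0] at key
  have hpos' : ((Φ.solutions.filter fun y => y i = v).card : ℝ) ≠ 0 := by
    exact_mod_cast hpos.ne'
  rw [div_eq_iff hpos', ← key]
  refine Eq.trans ?_ (h1.trans ?_)
  · congr!
  · refine Finset.sum_congr rfl fun x _ => ?_
    by_cases c1 : x i = v <;> by_cases c2 : ∀ j ∈ (Φ.scope a).erase i, x j = Φ.z a j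
    · rw [if_pos ⟨c1, c2⟩, if_pos c2, if_pos c1]
    · rw [if_neg (fun e => c2 e.2), if_neg c2, zero_mul]
    · rw [if_neg (fun e => c1 e.1), if_pos c2, if_neg c1]
    · rw [if_neg (fun e => c1 e.1), if_neg c2, zero_mul]
end

section
/- Let F be a k-SAT formula with k≥2 whose factor graph is a tree, μ the uniform distribution over its solutions, {h_{i→a},u_{a→i}} the unique BP fixed point with marginals ν_i, and U⊆V. Let {ĥ_{j→a},û_{a→l}}⊆[0,1] be the unique solution of ĥ_{j→a}=1 if j∈U, ĥ_{j→a}=1−∏_{b∈∂₋j(a)}(1−û_{b→j}) if j∉U, and û_{a→l}=∏_{j∈∂a∖{l}} ((1−tanh h_{j→a})/2)·ĥ_{j→a}. Let x* be a random solution drawn from μ. Then for every i∈V∖U, the probability that i is directly implied by the restriction x*_U equals ν_i(0)·(1−∏_{a∈∂₊i}(1−û_{a→i})) + ν_i(1)·(1−∏_{a∈∂₋i}(1−û_{a→i})). -/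
open scoped Classical

namespace KSAT

/-- The system of equations for the `hat` messages `(ĥ, û)` of the tree
analysis:  `ĥ_{j→a} = 1` if `j ∈ U`, `ĥ_{j→a} = 1 - ∏_{b ∈ ∂₋j(a)} (1 - û_{b→j})`
otherwise, and `û_{a→l} = ∏_{j ∈ ∂a∖l} ((1 - tanh h_{j→a})/2)·ĥ_{j→a}`,
where `h` is the BP fixed point. -/
def IsHatSolution [Fintype A] [DecidableEq V] [DecidableEq A] (Φ : KSAT V A)
    (U : Finset V) (h : V → A → ℝ) (hh : V → A → ℝ) (hu : A → V → ℝ) : Prop :=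
  ∀ a : A, ∀ j ∈ Φ.scope a,
    (hh j a = if j ∈ U then 1 else 1 - ∏ b ∈ Φ.disag j a, (1 - hu b j)) ∧
    (hu a j = ∏ l ∈ (Φ.scope a).erase j, ((1 - Real.tanh (h l a)) / 2 * hh l a))

end KSAT

set_option linter.unusedSectionVars false

namespace TreeBP

open Finset

section graph
variable {X : Type} {G : SimpleGraph X}

lemma closer_unique (hG : G.IsTree) {w p r s : X} (hr : G.Adj r p) (hs : G.Adj s p)
    (h1 : G.dist w r < G.dist w p) (h2 : G.dist w s < G.dist w p) : r = s := by
  obtain ⟨q1, hq1⟩ := hG.connected.exists_walk_length_eq_dist w r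
  obtain ⟨q2, hq2⟩ := hG.connected.exists_walk_length_eq_dist w s
  have e1 : (q1.concat hr).length = G.dist w p := by
    have := SimpleGraph.dist_le (q1.concat hr)
    rw [SimpleGraph.Walk.length_concat] at *
    omega
  have e2 : (q2.concat hs).length = G.dist w p := by
    have := SimpleGraph.dist_le (q2.concat hs)
    rw [SimpleGraph.Walk.length_concat] at *
    omega
  have := (hG.existsUnique_path w p).unique (SimpleGraph.Walk.isPath_of_length_eq_dist _ e1)
    (SimpleGraph.Walk.isPath_of_length_eq_dist _ e2)
  have h3 := congrArg SimpleGraph.Walk.penultimate this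
  simpa using h3

lemma closer_exists (hG : G.IsTree) {w p : X} (h : w ≠ p) :
    ∃ r, G.Adj r p ∧ G.dist w r < G.dist w p := by
  obtain ⟨q, hq⟩ := hG.connected.exists_walk_length_eq_dist w p
  have hn : ¬ q.Nil := SimpleGraph.Walk.not_nil_of_ne h
  refine ⟨q.penultimate, q.adj_penultimate hn, ?_⟩
  have h1 := SimpleGraph.dist_le q.dropLast
  have h2 : q.dropLast.length + 1 = q.length := by
    have := congrArg SimpleGraph.Walk.length (q.concat_dropLast (q.adj_penultimate hn))
    rwa [SimpleGraph.Walk.length_concat] at this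
  omega

/-- the side of `p` with respect to the edge `p q` -/
def sd (G : SimpleGraph X) (p q : X) : Set X := {w | G.dist w p < G.dist w q}

lemma mem_sd {p q w : X} : w ∈ sd G p q ↔ G.dist w p < G.dist w q := Iff.rfl

lemma self_mem_sd (hG : G.IsTree) {p q : X} (h : G.Adj p q) : p ∈ sd G p q := by
  rw [mem_sd, SimpleGraph.dist_self]
  exact hG.connected.pos_dist_of_ne h.ne

lemma not_mem_sd {p q : X} : q ∉ sd G p q := by
  rw [mem_sd, SimpleGraph.dist_self]; omega

lemma sd_sub (hG : G.IsTree) {p q r : X} (h : G.Adj p q) (hr : G.Adj r p) (hne : r ≠ q) :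
    sd G r p ⊆ sd G p q := by
  intro w hw
  rw [mem_sd] at *
  by_contra hc
  have := hG.dist_ne_of_adj w h
  exact hne (closer_unique hG hr h.symm hw (by omega))

lemma sd_disj (hG : G.IsTree) {p r s : X} (hr : G.Adj r p) (hs : G.Adj s p) (hne : r ≠ s) :
    Disjoint (sd G r p) (sd G s p) := by
  rw [Set.disjoint_left]
  intro w h1 h2
  exact hne (closer_unique hG hr hs h1 h2)

lemma sd_exists (hG : G.IsTree) {p q w : X} (hw : w ∈ sd G p q) (hne : w ≠ p) :
    ∃ r, G.Adj r p ∧ r ≠ q ∧ w ∈ sd G r p := by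
  obtain ⟨r, hr, hd⟩ := closer_exists hG hne
  refine ⟨r, hr, ?_, hd⟩
  rintro rfl
  rw [mem_sd] at hw
  omega

lemma sd_card_lt [Fintype X] (hG : G.IsTree) {p q r : X} (h : G.Adj p q) (hr : G.Adj r p)
    (hne : r ≠ q) : (sd G r p).ncard < (sd G p q).ncard := by
  apply Set.ncard_lt_ncard _ (Set.toFinite _)
  exact ⟨sd_sub hG h hr hne, fun hc => not_mem_sd (hc (self_mem_sd hG h))⟩

end graph

section ave
variable {V : Type} [Fintype V] [DecidableEq V]

/-- average over all assignments -/
noncomputable def ave (f : (V → Bool) → ℝ) : ℝ := (∑ x, f x) / (Fintype.card (V → Bool) : ℝ)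

lemma card_pos' : (0 : ℝ) < (Fintype.card (V → Bool) : ℝ) := by
  exact_mod_cast Fintype.card_pos

lemma ave_mul {f g : (V → Bool) → ℝ} {S T : Set V} (hf : DependsOn f S) (hg : DependsOn g T)
    (hST : Disjoint S T) : ave (fun x => f x * g x) = ave f * ave g := by
  classical
  let φ : (V → Bool) × (V → Bool) → (V → Bool) × (V → Bool) := fun p =>
    (fun v => if v ∈ S then p.1 v else p.2 v, fun v => if v ∈ S then p.2 v else p.1 v)
  have hφ : Function.Involutive φ := by
    rintro ⟨x, y⟩
    simp only [φ, Prod.mk.injEq]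
    constructor <;> funext v <;> by_cases hv : v ∈ S <;> simp [hv]
  have key : ∑ p : (V → Bool) × (V → Bool), f p.1 * g p.1
      = ∑ p : (V → Bool) × (V → Bool), f p.1 * g p.2 := by
    rw [← Equiv.sum_comp hφ.toPerm (fun p : (V → Bool) × (V → Bool) => f p.1 * g p.1)]
    refine Finset.sum_congr rfl ?_
    rintro ⟨x, y⟩ -
    have h1 : f (φ (x, y)).1 = f x := hf (fun v hv => by simp [φ, hv])
    have h2 : g (φ (x, y)).1 = g y := hg (fun v hv => by
      have : v ∉ S := fun h => Set.disjoint_left.1 hST h hv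
      simp [φ, this])
    change f (φ (x, y)).1 * g (φ (x, y)).1 = f x * g y
    rw [h1, h2]
  rw [Fintype.sum_prod_type, Fintype.sum_prod_type] at key
  simp only [Finset.sum_const, Finset.card_univ, nsmul_eq_mul, ← Finset.mul_sum,
    ← Finset.sum_mul] at key
  unfold ave
  have := (card_pos' (V := V)).ne'
  field_simp
  linarith

lemma DependsOn.prod {ι : Type} {s : Finset ι} {f : ι → (V → Bool) → ℝ} {S : Set V}
    (hf : ∀ b ∈ s, DependsOn (f b) S) : DependsOn (fun x => ∏ b ∈ s, f b x) S := by
  intro x y hxy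
  exact Finset.prod_congr rfl fun b hb => hf b hb hxy

lemma ave_one : ave (fun _ : V → Bool => (1 : ℝ)) = 1 := by
  unfold ave
  have := (card_pos' (V := V)).ne'
  simp only [Finset.sum_const, Finset.card_univ, nsmul_eq_mul, mul_one]
  exact div_self this

lemma ave_prod {ι : Type} (s : Finset ι) (f : ι → (V → Bool) → ℝ) (S : ι → Set V)
    (hf : ∀ b ∈ s, DependsOn (f b) (S b))
    (hS : ∀ b ∈ s, ∀ c ∈ s, b ≠ c → Disjoint (S b) (S c)) :
    ave (fun x => ∏ b ∈ s, f b x) = ∏ b ∈ s, ave (f b) := by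
  classical
  induction s using Finset.induction_on with
  | empty => simpa using ave_one
  | insert a s ha ih =>
    simp only [Finset.prod_insert ha]
    rw [ave_mul (hf a (by simp)) (T := ⋃ b ∈ s, S b), ih]
    · intro b hb; exact hf b (by simp [hb])
    · intro b hb c hc; exact hS b (by simp [hb]) c (by simp [hc])
    · apply DependsOn.prod
      intro b hb
      exact (hf b (by simp [hb])).mono (Set.subset_biUnion_of_mem (u := S) hb)
    · simp only [Set.disjoint_iUnion_right]
      intro b hb
      exact hS a (by simp) b (by simp [hb]) (by rintro rfl; exact ha hb)

lemma ave_add (f g : (V → Bool) → ℝ) : ave (fun x => f x + g x) = ave f + ave g := by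
  simp [ave, Finset.sum_add_distrib, add_div]

lemma ave_sub (f g : (V → Bool) → ℝ) : ave (fun x => f x - g x) = ave f - ave g := by
  simp [ave, Finset.sum_sub_distrib, sub_div]

/-- indicator of a proposition -/
noncomputable def ind (p : Prop) : ℝ := by
  classical exact if p then 1 else 0

lemma ind_true {p : Prop} (h : p) : ind p = 1 := by simp [ind, h]
lemma ind_false {p : Prop} (h : ¬ p) : ind p = 0 := by simp [ind, h]
lemma ind_congr {p q : Prop} (h : p ↔ q) : ind p = ind q := by rw [propext h]

lemma ind_forall {ι : Type} (s : Finset ι) (p : ι → Prop) :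
    ind (∀ b ∈ s, p b) = ∏ b ∈ s, ind (p b) := by
  by_cases h : ∀ b ∈ s, p b
  · rw [ind_true h, Finset.prod_eq_one]
    intro b hb; exact ind_true (h b hb)
  · rw [ind_false h]
    push Not at h
    obtain ⟨b, hb, hp⟩ := h
    exact (Finset.prod_eq_zero hb (ind_false hp)).symm

lemma ind_not (p : Prop) : ind (¬ p) = 1 - ind p := by
  by_cases h : p <;> simp [ind, h]

lemma ind_and (p q : Prop) : ind (p ∧ q) = ind p * ind q := by
  by_cases h : p <;> by_cases h' : q <;> simp [ind, h, h']

lemma ave_ind_eq (j : V) (v : Bool) : ave (fun x => ind (x j = v)) = 1 / 2 := by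
  have h1 : ave (fun x => ind (x j = v)) + ave (fun x => ind (x j = !v)) = 1 := by
    rw [← ave_add, ← ave_one (V := V)]
    congr 1; funext x
    cases hx : x j <;> cases v <;> simp [ind]
  have h2 : ave (fun x => ind (x j = v)) = ave (fun x => ind (x j = !v)) := by
    unfold ave
    congr 1
    have hi : Function.Involutive (fun x : V → Bool => Function.update x j (!x j)) := by
      intro x; simp
    rw [← Equiv.sum_comp hi.toPerm]
    refine Finset.sum_congr rfl fun x _ => ?_
    apply ind_congr
    simp [Function.Involutive.toPerm]
  linarith

/-- conditioning on one variable, with independent branches -/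
lemma ave_cond {ι : Type} (s : Finset ι) (f : ι → (V → Bool) → ℝ) (S : ι → Set V) (j : V)
    (v : Bool)
    (hf : ∀ b ∈ s, DependsOn (fun x => f b (Function.update x j v)) (S b))
    (hj : ∀ b ∈ s, j ∉ S b)
    (hS : ∀ b ∈ s, ∀ c ∈ s, b ≠ c → Disjoint (S b) (S c)) :
    ave (fun x => ind (x j = v) * ∏ b ∈ s, f b x)
      = 1 / 2 * ∏ b ∈ s, ave (fun x => f b (Function.update x j v)) := by
  have : (fun x => ind (x j = v) * ∏ b ∈ s, f b x)
      = fun x => ind (x j = v) * ∏ b ∈ s, f b (Function.update x j v) := by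
    funext x
    by_cases h : x j = v
    · subst h; simp
    · simp [ind_false h]
  rw [this, ave_mul (S := {j}) (T := ⋃ b ∈ s, S b), ave_ind_eq, ave_prod s _ S hf hS]
  · intro x y hxy
    simp [hxy j rfl]
  · apply DependsOn.prod (f := fun b x => f b (Function.update x j v))
    intro b hb
    exact (hf b hb).mono (Set.subset_biUnion_of_mem (u := S) hb)
  · simpa using hj

end ave

section formula
variable {V A : Type} [Fintype V] [Fintype A] [DecidableEq V] [DecidableEq A]
variable (Φ : KSAT V A)

lemma adj_iff {i : V} {a : A} :
    Φ.factorGraph.Adj (Sum.inl i) (Sum.inr a) ↔ i ∈ Φ.scope a := by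
  simp [KSAT.factorGraph]

lemma adj_iff' {i : V} {a : A} :
    Φ.factorGraph.Adj (Sum.inr a) (Sum.inl i) ↔ i ∈ Φ.scope a := by
  rw [SimpleGraph.adj_comm, adj_iff]

lemma not_adj_inl {i j : V} : ¬ Φ.factorGraph.Adj (Sum.inl i) (Sum.inl j) := by
  simp [KSAT.factorGraph]

lemma not_adj_inr {i j : A} : ¬ Φ.factorGraph.Adj (Sum.inr i) (Sum.inr j) := by
  simp [KSAT.factorGraph]

lemma mem_nbr {i : V} {a : A} : a ∈ Φ.nbr i ↔ i ∈ Φ.scope a := by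
  simp [KSAT.nbr]

/-- clauses on a side -/
noncomputable def Cs (p q : V ⊕ A) : Finset A :=
  Finset.univ.filter fun c => Sum.inr c ∈ sd Φ.factorGraph p q

/-- variables on a side -/
def Vs (p q : V ⊕ A) : Set V := {v | Sum.inl v ∈ sd Φ.factorGraph p q}

lemma mem_Cs {p q : V ⊕ A} {c : A} : c ∈ Cs Φ p q ↔ Sum.inr c ∈ sd Φ.factorGraph p q := by
  simp [Cs]

/-- satisfaction weight of the clauses on the side of `l` of edge `l b` -/
noncomputable def W (l : V) (b : A) (x : V → Bool) : ℝ :=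
  ∏ c ∈ Cs Φ (Sum.inl l) (Sum.inr b), ind (Φ.Satisfies x c)

/-- satisfaction weight of the branch of clause `b` below variable `j` -/
noncomputable def Br (b : A) (j : V) (x : V → Bool) : ℝ :=
  ind (Φ.Satisfies x b) * ∏ l ∈ (Φ.scope b).erase j, W Φ l b x

variable {Φ}

lemma prod_Cs_inr (hG : Φ.factorGraph.IsTree) {b : A} {j : V} (hj : j ∈ Φ.scope b)
    (x : V → Bool) :
    ∏ c ∈ Cs Φ (Sum.inr b) (Sum.inl j), ind (Φ.Satisfies x c) = Br Φ b j x := by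
  have hE : Cs Φ (Sum.inr b) (Sum.inl j) = insert b (((Φ.scope b).erase j).biUnion
      fun l => Cs Φ (Sum.inl l) (Sum.inr b)) := by
    ext c
    simp only [mem_Cs, Finset.mem_insert, Finset.mem_biUnion, Finset.mem_erase]
    constructor
    · intro hc
      by_cases h : c = b
      · exact Or.inl h
      · obtain ⟨r, hr, hrq, hw⟩ := sd_exists hG hc (by simpa using h)
        rcases r with l | d
        · exact Or.inr ⟨l, ⟨by simpa using hrq, (adj_iff Φ).1 hr⟩, hw⟩
        · exact absurd hr (not_adj_inr Φ)
    · rintro (rfl | ⟨l, ⟨hl, hlb⟩, hw⟩)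
      · exact self_mem_sd hG ((adj_iff' Φ).2 hj)
      · exact sd_sub hG ((adj_iff' Φ).2 hj) ((adj_iff Φ).2 hlb) (by simpa using hl) hw
  rw [hE, Finset.prod_insert, Finset.prod_biUnion]
  · rfl
  · intro l hl m hm hlm
    rw [Function.onFun, Finset.disjoint_left]
    intro c h1 h2
    rw [mem_Cs] at h1 h2
    have hl' := Finset.mem_of_mem_erase (Finset.mem_coe.1 hl)
    have hm' := Finset.mem_of_mem_erase (Finset.mem_coe.1 hm)
    exact Set.disjoint_left.1 (sd_disj hG ((adj_iff Φ).2 hl') ((adj_iff Φ).2 hm')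
      (by simpa using hlm)) h1 h2
  · simp only [Finset.mem_biUnion, mem_Cs, not_exists, not_and]
    intro l _
    exact not_mem_sd

lemma W_eq (hG : Φ.factorGraph.IsTree) {a : A} {j : V} (hj : j ∈ Φ.scope a) (x : V → Bool) :
    W Φ j a x = ∏ b ∈ (Φ.nbr j).erase a, Br Φ b j x := by
  have hE : Cs Φ (Sum.inl j) (Sum.inr a) = ((Φ.nbr j).erase a).biUnion
      fun b => Cs Φ (Sum.inr b) (Sum.inl j) := by
    ext c
    simp only [mem_Cs, Finset.mem_biUnion, Finset.mem_erase, mem_nbr]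
    constructor
    · intro hc
      obtain ⟨r, hr, hrq, hw⟩ := sd_exists hG hc (by simp)
      rcases r with l | d
      · exact absurd hr (not_adj_inl Φ)
      · exact ⟨d, ⟨by simpa using hrq, (adj_iff' Φ).1 hr⟩, hw⟩
    · rintro ⟨l, ⟨hl, hlb⟩, hw⟩
      exact sd_sub hG ((adj_iff Φ).2 hj) ((adj_iff' Φ).2 hlb) (by simpa using hl) hw
  rw [W, hE, Finset.prod_biUnion]
  · refine Finset.prod_congr rfl fun b hb => ?_
    exact prod_Cs_inr hG ((mem_nbr Φ).1 (Finset.mem_of_mem_erase hb)) x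
  · intro l hl m hm hlm
    rw [Function.onFun, Finset.disjoint_left]
    intro c h1 h2
    rw [mem_Cs] at h1 h2
    have hl' := (mem_nbr Φ).1 (Finset.mem_of_mem_erase (Finset.mem_coe.1 hl))
    have hm' := (mem_nbr Φ).1 (Finset.mem_of_mem_erase (Finset.mem_coe.1 hm))
    exact Set.disjoint_left.1 (sd_disj hG ((adj_iff' Φ).2 hl') ((adj_iff' Φ).2 hm')
      (by simpa using hlm)) h1 h2

lemma root_eq (hG : Φ.factorGraph.IsTree) (i : V) (x : V → Bool) :
    ind (Φ.IsSolution x) = ∏ b ∈ Φ.nbr i, Br Φ b i x := by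
  have h0 : ind (Φ.IsSolution x) = ∏ c : A, ind (Φ.Satisfies x c) := by
    rw [← ind_forall]; apply ind_congr; simp [KSAT.IsSolution]
  have hE : (Finset.univ : Finset A) = (Φ.nbr i).biUnion
      fun b => Cs Φ (Sum.inr b) (Sum.inl i) := by
    ext c
    simp only [mem_Cs, Finset.mem_biUnion, mem_nbr, Finset.mem_univ, true_iff]
    obtain ⟨r, hr, hw⟩ := closer_exists hG (w := Sum.inr c) (p := Sum.inl i) (by simp)
    rcases r with l | d
    · exact absurd hr (not_adj_inl Φ)
    · exact ⟨d, (adj_iff' Φ).1 hr, hw⟩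
  rw [h0, hE, Finset.prod_biUnion]
  · refine Finset.prod_congr rfl fun b hb => ?_
    exact prod_Cs_inr hG ((mem_nbr Φ).1 hb) x
  · intro l hl m hm hlm
    rw [Function.onFun, Finset.disjoint_left]
    intro c h1 h2
    rw [mem_Cs] at h1 h2
    have hl' := (mem_nbr Φ).1 (Finset.mem_coe.1 hl)
    have hm' := (mem_nbr Φ).1 (Finset.mem_coe.1 hm)
    exact Set.disjoint_left.1 (sd_disj hG ((adj_iff' Φ).2 hl') ((adj_iff' Φ).2 hm')
      (by simpa using hlm)) h1 h2

lemma Vs_sub (hG : Φ.factorGraph.IsTree) {b : A} {j l : V} (hj : j ∈ Φ.scope b)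
    (hl : l ∈ (Φ.scope b).erase j) :
    Vs Φ (Sum.inl l) (Sum.inr b) ⊆ Vs Φ (Sum.inr b) (Sum.inl j) := by
  intro v hv
  rw [Finset.mem_erase] at hl
  exact sd_sub hG ((adj_iff' Φ).2 hj) ((adj_iff Φ).2 hl.2) (by simpa using hl.1) hv

lemma Vs_sub' (hG : Φ.factorGraph.IsTree) {a b : A} {j : V} (hj : j ∈ Φ.scope a)
    (hb : b ∈ (Φ.nbr j).erase a) :
    Vs Φ (Sum.inr b) (Sum.inl j) ⊆ Vs Φ (Sum.inl j) (Sum.inr a) := by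
  intro v hv
  rw [Finset.mem_erase, mem_nbr] at hb
  exact sd_sub hG ((adj_iff Φ).2 hj) ((adj_iff' Φ).2 hb.2) (by simpa using hb.1) hv

lemma self_mem_Vs (hG : Φ.factorGraph.IsTree) {a : A} {j : V} (hj : j ∈ Φ.scope a) :
    j ∈ Vs Φ (Sum.inl j) (Sum.inr a) := self_mem_sd hG ((adj_iff Φ).2 hj)

lemma not_mem_Vs {a : A} {j : V} : j ∉ Vs Φ (Sum.inr a) (Sum.inl j) := not_mem_sd

lemma Vs_disj (hG : Φ.factorGraph.IsTree) {b : A} {l m : V} (hl : l ∈ Φ.scope b)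
    (hm : m ∈ Φ.scope b) (hlm : l ≠ m) :
    Disjoint (Vs Φ (Sum.inl l) (Sum.inr b)) (Vs Φ (Sum.inl m) (Sum.inr b)) := by
  rw [Set.disjoint_left]
  intro v h1 h2
  exact Set.disjoint_left.1 (sd_disj hG ((adj_iff Φ).2 hl) ((adj_iff Φ).2 hm)
      (by simpa using hlm)) h1 h2

lemma Vs_disj' (hG : Φ.factorGraph.IsTree) {j : V} {b c : A} (hl : j ∈ Φ.scope b)
    (hm : j ∈ Φ.scope c) (hlm : b ≠ c) :
    Disjoint (Vs Φ (Sum.inr b) (Sum.inl j)) (Vs Φ (Sum.inr c) (Sum.inl j)) := by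
  rw [Set.disjoint_left]
  intro v h1 h2
  exact Set.disjoint_left.1 (sd_disj hG ((adj_iff' Φ).2 hl) ((adj_iff' Φ).2 hm)
      (by simpa using hlm)) h1 h2

variable (Φ) in
/-- directed derivation -/
inductive D (U : Finset V) (x : V → Bool) : V → A → Prop
  | base (j : V) (a : A) (hj : j ∈ U) : D U x j a
  | step (j : V) (a b : A) (hb : b ∈ Φ.disag j a)
      (hl : ∀ l ∈ (Φ.scope b).erase j, x l = Φ.z b l)
      (hd : ∀ l ∈ (Φ.scope b).erase j, D U x l b) : D U x j a

variable (Φ) in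
/-- directed derivation through clause `b` -/
def dB (U : Finset V) (x : V → Bool) (b : A) (j : V) : Prop :=
  ∀ l ∈ (Φ.scope b).erase j, x l = Φ.z b l ∧ D Φ U x l b

variable {U : Finset V}

lemma mem_disag {j : V} {a b : A} :
    b ∈ Φ.disag j a ↔ b ∈ (Φ.nbr j).erase a ∧ Φ.z b j = !Φ.z a j := by
  simp [KSAT.disag]

lemma mem_agree {j : V} {a b : A} :
    b ∈ Φ.agree j a ↔ b ∈ (Φ.nbr j).erase a ∧ Φ.z b j = Φ.z a j := by
  simp [KSAT.agree]

lemma D_iff {x : V → Bool} {j : V} {a : A} :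
    D Φ U x j a ↔ j ∈ U ∨ ∃ b ∈ Φ.disag j a, dB Φ U x b j := by
  constructor
  · intro h
    cases h with
    | base _ _ hj => exact Or.inl hj
    | step _ _ b hb hl hd => exact Or.inr ⟨b, hb, fun l h => ⟨hl l h, hd l h⟩⟩
  · rintro (hj | ⟨b, hb, hl⟩)
    · exact D.base j a hj
    · exact D.step j a b hb (fun l h => (hl l h).1) (fun l h => (hl l h).2)

lemma D_dep (hG : Φ.factorGraph.IsTree) {x y : V → Bool} {j : V} {a : A} (h : D Φ U x j a)
    (hja : j ∈ Φ.scope a) (hxy : ∀ v ∈ Vs Φ (Sum.inl j) (Sum.inr a), x v = y v) :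
    D Φ U y j a := by
  induction h with
  | base j a hj => exact D.base j a hj
  | step j a b hb hl hd ih =>
    suffices H : dB Φ U y b j from D_iff.2 (Or.inr ⟨b, hb, H⟩)
    intro l hl'
    have hb' := (mem_disag.1 hb).1
    have hjb : j ∈ Φ.scope b := (mem_nbr Φ).1 (Finset.mem_of_mem_erase hb')
    have hlb := Finset.mem_of_mem_erase hl'
    have hs := (Vs_sub hG hjb hl').trans (Vs_sub' hG hja hb')
    refine ⟨?_, ih l hl' hlb fun v hv => hxy v (hs hv)⟩
    rw [← hxy l (hs (self_mem_Vs hG hlb))]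
    exact hl l hl'

lemma D_dependsOn (hG : Φ.factorGraph.IsTree) {j : V} {a : A} (hja : j ∈ Φ.scope a) :
    DependsOn (fun x : V → Bool => ind (D Φ U x j a)) (Vs Φ (Sum.inl j) (Sum.inr a)) := by
  intro x y hxy
  apply ind_congr
  exact ⟨fun h => D_dep hG h hja hxy, fun h => D_dep hG h hja fun v hv => (hxy v hv).symm⟩

lemma derived_sound {x : V → Bool} (hx : Φ.IsSolution x) {j : V} {v : Bool}
    (h : KSAT.Derived Φ U x j v) : x j = v := by
  induction h with
  | fixed i hi => rfl
  | ucp a i hia hrest ih =>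
    obtain ⟨l, hl, hne⟩ := hx a
    by_cases hli : l = i
    · subst hli
      revert hne
      cases x l <;> cases Φ.z a l <;> simp
    · exact absurd (ih l (Finset.mem_erase.2 ⟨hli, hl⟩)) hne

lemma derived_of_D {x : V → Bool} {j : V} {a : A} (h : D Φ U x j a) (hj : x j = Φ.z a j) :
    KSAT.Derived Φ U x j (Φ.z a j) := by
  induction h with
  | base j a hU => rw [← hj]; exact KSAT.Derived.fixed j hU
  | step j a b hb hl hd ih =>
    obtain ⟨hb', hz⟩ := mem_disag.1 hb
    have : Φ.z a j = !Φ.z b j := by rw [hz]; simp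
    rw [this]
    refine KSAT.Derived.ucp b j ((mem_nbr Φ).1 (Finset.mem_of_mem_erase hb')) fun l hl' => ?_
    exact ih l hl' (hl l hl')

lemma D_of_derived {x : V → Bool} (hx : Φ.IsSolution x) {j : V} {v : Bool}
    (h : KSAT.Derived Φ U x j v) : ∀ a : A, v = Φ.z a j → D Φ U x j a := by
  induction h with
  | fixed i hi => intro a _; exact D.base i a hi
  | ucp b i hib hrest ih =>
    intro a ha
    refine D.step i a b ?_ (fun l hl => derived_sound hx (hrest l hl)) (fun l hl => ih l hl b rfl)
    rw [mem_disag, Finset.mem_erase, mem_nbr]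
    refine ⟨⟨?_, hib⟩, ?_⟩
    · rintro rfl
      revert ha; cases Φ.z b i <;> simp
    · rw [← ha]; simp

lemma derived_root {x : V → Bool} (hx : Φ.IsSolution x) {i : V} (hi : i ∉ U) {v : Bool} :
    KSAT.Derived Φ U x i v ↔ ∃ b ∈ Φ.nbr i, Φ.z b i = !v ∧ dB Φ U x b i := by
  constructor
  · intro h
    cases h with
    | fixed _ h => exact absurd h hi
    | ucp a _ hia hrest =>
      exact ⟨a, (mem_nbr Φ).2 hia, by simp, fun l hl =>
        ⟨derived_sound hx (hrest l hl), D_of_derived hx (hrest l hl) a rfl⟩⟩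
  · rintro ⟨b, hb, hz, hd⟩
    have : v = !Φ.z b i := by rw [hz]; simp
    rw [this]
    exact KSAT.Derived.ucp b i ((mem_nbr Φ).1 hb) fun l hl => derived_of_D (hd l hl).2 (hd l hl).1

variable (Φ U) in
/-- the induction claim on the edge `l b` -/
structure Cl (h hh : V → A → ℝ) (l : V) (b : A) : Prop where
  dep : DependsOn (W Φ l b) (Vs Φ (Sum.inl l) (Sum.inr b))
  pos : 0 < ave (W Φ l b)
  marg : ave (fun x => ind (x l = Φ.z b l) * W Φ l b x)
    = (1 - Real.tanh (h l b)) / 2 * ave (W Φ l b)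
  hat : ave (fun x => ind (x l = Φ.z b l) * W Φ l b x * ind (D Φ U x l b))
    = (1 - Real.tanh (h l b)) / 2 * hh l b * ave (W Φ l b)

variable {h hh : V → A → ℝ}

lemma W_upd (hG : Φ.factorGraph.IsTree) {b : A} {j l : V} (hj : j ∈ Φ.scope b)
    (hl : l ∈ (Φ.scope b).erase j) (hC : Cl Φ U h hh l b) (x : V → Bool) (v : Bool) :
    W Φ l b (Function.update x j v) = W Φ l b x := by
  apply hC.dep
  intro w hw
  have : w ≠ j := by
    rintro rfl
    exact not_mem_Vs (Vs_sub hG hj hl hw)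
  simp [this]

lemma Br_upd (hG : Φ.factorGraph.IsTree) {b : A} {j : V} (hj : j ∈ Φ.scope b)
    (hC : ∀ l ∈ (Φ.scope b).erase j, Cl Φ U h hh l b) (x : V → Bool) (v : Bool) :
    Br Φ b j (Function.update x j v) = ∏ l ∈ (Φ.scope b).erase j, W Φ l b x
      - ind (Φ.z b j = v) * ∏ l ∈ (Φ.scope b).erase j, (ind (x l = Φ.z b l) * W Φ l b x) := by
  have hs : ind (Φ.Satisfies (Function.update x j v) b)
      = 1 - ind (Φ.z b j = v) * ∏ l ∈ (Φ.scope b).erase j, ind (x l = Φ.z b l) := by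
    rw [← ind_forall, ← ind_and, ← ind_not]
    apply ind_congr
    rw [not_and_or]
    push Not
    constructor
    · rintro ⟨l, hl, hne⟩
      by_cases hlj : l = j
      · subst hlj
        left; simpa using hne.symm
      · right
        exact ⟨l, Finset.mem_erase.2 ⟨hlj, hl⟩, by simpa [hlj] using hne⟩
    · rintro (hne | ⟨l, hl, hne⟩)
      · exact ⟨j, hj, by simpa using hne.symm⟩
      · rw [Finset.mem_erase] at hl
        exact ⟨l, hl.2, by simpa [hl.1] using hne⟩
  rw [Br, hs, Finset.prod_congr rfl fun l hl => W_upd hG hj hl (hC l hl) x v,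
    Finset.prod_mul_distrib]
  ring

lemma dep_eval {S : Set V} {l : V} (hl : l ∈ S) (v : Bool) :
    DependsOn (fun x : V → Bool => ind (x l = v)) S := by
  intro x y hxy
  apply ind_congr
  rw [hxy l hl]

lemma dep_mul {S : Set V} {f g : (V → Bool) → ℝ} (hf : DependsOn f S) (hg : DependsOn g S) :
    DependsOn (fun x => f x * g x) S := by
  intro x y hxy
  show f x * g x = f y * g y
  rw [hf hxy, hg hxy]

lemma dep_sub {S : Set V} {f g : (V → Bool) → ℝ} (hf : DependsOn f S) (hg : DependsOn g S) :
    DependsOn (fun x => f x - g x) S := by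
  intro x y hxy
  show f x - g x = f y - g y
  rw [hf hxy, hg hxy]

lemma dep_const {S : Set V} (c : ℝ) : DependsOn (fun _ : V → Bool => c) S := by
  intro x y _; rfl

lemma Br_dep (hG : Φ.factorGraph.IsTree) {b : A} {j : V} (hj : j ∈ Φ.scope b)
    (hC : ∀ l ∈ (Φ.scope b).erase j, Cl Φ U h hh l b) (v : Bool) :
    DependsOn (fun x => Br Φ b j (Function.update x j v)) (Vs Φ (Sum.inr b) (Sum.inl j)) := by
  simp only [Br_upd hG hj hC]
  have hW : ∀ l ∈ (Φ.scope b).erase j, DependsOn (W Φ l b) (Vs Φ (Sum.inr b) (Sum.inl j)) :=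
    fun l hl => (hC l hl).dep.mono (Vs_sub hG hj hl)
  refine dep_sub (DependsOn.prod hW) (dep_mul (dep_const _) (DependsOn.prod fun l hl => ?_))
  refine dep_mul (dep_eval ?_ _) (hW l hl)
  exact Vs_sub hG hj hl (self_mem_Vs hG (Finset.mem_of_mem_erase hl))

lemma dB_dep (hG : Φ.factorGraph.IsTree) {b : A} {j : V} (hj : j ∈ Φ.scope b) :
    DependsOn (fun x : V → Bool => ind (dB Φ U x b j)) (Vs Φ (Sum.inr b) (Sum.inl j)) := by
  simp only [dB, ind_forall, ind_and]
  refine DependsOn.prod fun l hl => dep_mul (dep_eval ?_ _) ?_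
  · exact Vs_sub hG hj hl (self_mem_Vs hG (Finset.mem_of_mem_erase hl))
  · exact (D_dependsOn hG (Finset.mem_of_mem_erase hl)).mono (Vs_sub hG hj hl)

lemma dB_upd (hG : Φ.factorGraph.IsTree) {b : A} {j : V} (hj : j ∈ Φ.scope b)
    (x : V → Bool) (v : Bool) :
    ind (dB Φ U (Function.update x j v) b j) = ind (dB Φ U x b j) := by
  apply dB_dep hG hj
  intro w hw
  have : w ≠ j := by
    rintro rfl
    exact not_mem_Vs hw
  simp [this]

/-- product of the child normalisations -/
noncomputable def Pn (Φ : KSAT V A) (j : V) (b : A) : ℝ :=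
  ∏ l ∈ (Φ.scope b).erase j, ave (W Φ l b)

lemma ave_child (hG : Φ.factorGraph.IsTree) {b : A} {j : V}
    (f : V → (V → Bool) → ℝ)
    (hf : ∀ l ∈ (Φ.scope b).erase j, DependsOn (f l) (Vs Φ (Sum.inl l) (Sum.inr b))) :
    ave (fun x => ∏ l ∈ (Φ.scope b).erase j, f l x)
      = ∏ l ∈ (Φ.scope b).erase j, ave (f l) := by
  refine ave_prod _ f _ hf fun l hl m hm hlm => ?_
  exact Vs_disj hG (Finset.mem_of_mem_erase hl) (Finset.mem_of_mem_erase hm) hlm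

lemma ave_const_mul (c : ℝ) (f : (V → Bool) → ℝ) : ave (fun x => c * f x) = c * ave f := by
  simp [ave, ← Finset.mul_sum, mul_div_assoc]

lemma Br_ave (hG : Φ.factorGraph.IsTree) {b : A} {j : V} (hj : j ∈ Φ.scope b)
    (hC : ∀ l ∈ (Φ.scope b).erase j, Cl Φ U h hh l b) (v : Bool) :
    ave (fun x => Br Φ b j (Function.update x j v)) = Pn Φ j b *
      (1 - ind (Φ.z b j = v) * ∏ l ∈ (Φ.scope b).erase j, (1 - Real.tanh (h l b)) / 2) := by
  simp only [Br_upd hG hj hC]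
  rw [ave_sub, ave_const_mul, ave_child hG _ fun l hl => (hC l hl).dep,
    ave_child hG (fun l x => ind (x l = Φ.z b l) * W Φ l b x) fun l hl =>
      dep_mul (dep_eval (self_mem_Vs hG (Finset.mem_of_mem_erase hl)) _) (hC l hl).dep,
    Finset.prod_congr rfl fun l hl => (hC l hl).marg, Finset.prod_mul_distrib]
  simp only [Pn]
  ring

lemma Br_ave_d (hG : Φ.factorGraph.IsTree) {b : A} {j : V} (hj : j ∈ Φ.scope b)
    (hC : ∀ l ∈ (Φ.scope b).erase j, Cl Φ U h hh l b) {v : Bool} (hv : Φ.z b j ≠ v) :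
    ave (fun x => Br Φ b j (Function.update x j v) *
        (1 - ind (dB Φ U (Function.update x j v) b j))) = Pn Φ j b *
      (1 - ∏ l ∈ (Φ.scope b).erase j, ((1 - Real.tanh (h l b)) / 2 * hh l b)) := by
  have : (fun x => Br Φ b j (Function.update x j v) *
        (1 - ind (dB Φ U (Function.update x j v) b j)))
      = fun x => Br Φ b j (Function.update x j v) - ∏ l ∈ (Φ.scope b).erase j,
        (ind (x l = Φ.z b l) * W Φ l b x * ind (D Φ U x l b)) := by
    funext x
    rw [dB_upd hG hj, Br_upd hG hj hC, ind_false hv, dB, ind_forall]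
    simp only [ind_and, Finset.prod_mul_distrib]
    ring
  rw [this, ave_sub, Br_ave hG hj hC, ind_false hv, 
    ave_child hG (fun l x => ind (x l = Φ.z b l) * W Φ l b x * ind (D Φ U x l b)) fun l hl =>
      dep_mul (dep_mul (dep_eval (self_mem_Vs hG (Finset.mem_of_mem_erase hl)) _) (hC l hl).dep)
      (D_dependsOn hG (Finset.mem_of_mem_erase hl)),
    Finset.prod_congr rfl fun l hl => (hC l hl).hat, Finset.prod_mul_distrib]
  simp only [Pn]
  ring

lemma half_lt (t : ℝ) : 0 < (1 - Real.tanh t) / 2 ∧ (1 - Real.tanh t) / 2 < 1 := by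
  have h1 := Real.tanh_lt_one t
  have h2 := Real.neg_one_lt_tanh t
  constructor <;> linarith

variable {u hu : A → V → ℝ} {k : ℕ}

lemma exp_u (hk2 : 2 ≤ k) (hk : ∀ a : A, (Φ.scope a).card = k) (hbp : Φ.IsBPFixedPoint k h u)
    {b : A} {j : V} (hj : j ∈ Φ.scope b) :
    1 - ∏ l ∈ (Φ.scope b).erase j, (1 - Real.tanh (h l b)) / 2 = Real.exp (-2 * u b j) := by
  have hc : ((Φ.scope b).erase j).card = k - 1 := by rw [Finset.card_erase_of_mem hj, hk]
  have hpos : 0 < 1 - ∏ l ∈ (Φ.scope b).erase j, (1 - Real.tanh (h l b)) / 2 := by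
    have hne : ((Φ.scope b).erase j).Nonempty := by
      rw [← Finset.card_pos]; omega
    obtain ⟨m, hm⟩ := hne
    rw [← Finset.mul_prod_erase _ _ hm]
    have h1 : ∏ l ∈ ((Φ.scope b).erase j).erase m, (1 - Real.tanh (h l b)) / 2 ≤ 1 :=
      Finset.prod_le_one (fun l _ => (half_lt _).1.le) fun l _ => (half_lt _).2.le
    have := half_lt (h m b)
    nlinarith
  rw [(hbp b j hj).2, KSAT.bpUval]
  have : (∏ l ∈ (Φ.scope b).erase j, (1 - Real.tanh (h l b))) / 2 ^ (k - 1)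
      = ∏ l ∈ (Φ.scope b).erase j, (1 - Real.tanh (h l b)) / 2 := by
    rw [Finset.prod_div_distrib, Finset.prod_const, hc]
  rw [this, ← mul_assoc, show (-2 : ℝ) * (-(1 / 2)) = 1 by norm_num, one_mul, Real.exp_log hpos]

lemma core (hk2 : 2 ≤ k) (hk : ∀ a : A, (Φ.scope a).card = k) (hG : Φ.factorGraph.IsTree)
    (hbp : Φ.IsBPFixedPoint k h u) (hhat : Φ.IsHatSolution U h hh hu) {j : V} {B : Finset A}
    (hB : B ⊆ Φ.nbr j)
    (hC : ∀ b ∈ B, ∀ l ∈ (Φ.scope b).erase j, Cl Φ U h hh l b) :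
    ∃ P : ℝ, 0 < P ∧ ∀ v : Bool,
      ave (fun x => ind (x j = v) * ∏ b ∈ B, Br Φ b j x)
        = P * Real.exp (-2 * ∑ b ∈ B.filter (fun b => Φ.z b j = v), u b j) ∧
      ave (fun x => ind (x j = v) * ((∏ b ∈ B, Br Φ b j x) *
          (1 - ind (∃ b ∈ B, Φ.z b j = !v ∧ dB Φ U x b j))))
        = P * Real.exp (-2 * ∑ b ∈ B.filter (fun b => Φ.z b j = v), u b j) *
          ∏ b ∈ B.filter (fun b => Φ.z b j = !v), (1 - hu b j) := by
  have hBj : ∀ b ∈ B, j ∈ Φ.scope b := fun b hb => (mem_nbr Φ).1 (hB hb)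
  refine ⟨1 / 2 * ∏ b ∈ B, Pn Φ j b, ?_, fun v => ⟨?_, ?_⟩⟩
  · refine mul_pos (by norm_num) (Finset.prod_pos fun b hb => Finset.prod_pos fun l hl => ?_)
    exact (hC b hb l hl).pos
  · rw [ave_cond B (fun b => Br Φ b j) (fun b => Vs Φ (Sum.inr b) (Sum.inl j)) j v
      (fun b hb => Br_dep hG (hBj b hb) (hC b hb) v) (fun b _ => not_mem_Vs)
      (fun b hb c hc hbc => Vs_disj' hG (hBj b hb) (hBj c hc) hbc)]
    rw [mul_assoc, Finset.mul_sum, Real.exp_sum, Finset.prod_filter, ← Finset.prod_mul_distrib]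
    congr 1
    refine Finset.prod_congr rfl fun b hb => ?_
    rw [Br_ave hG (hBj b hb) (hC b hb)]
    split_ifs with hz
    · rw [ind_true hz, one_mul, exp_u hk2 hk hbp (hBj b hb)]
    · rw [ind_false hz]; ring
  · have hE : (fun x => ind (x j = v) * ((∏ b ∈ B, Br Φ b j x) *
          (1 - ind (∃ b ∈ B, Φ.z b j = !v ∧ dB Φ U x b j))))
        = fun x => ind (x j = v) * ∏ b ∈ B, (Br Φ b j x *
          if Φ.z b j = !v then (1 - ind (dB Φ U x b j)) else 1) := by
      funext x
      rw [Finset.prod_mul_distrib, ← ind_not]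
      congr 2
      have : (¬ ∃ b ∈ B, Φ.z b j = !v ∧ dB Φ U x b j) ↔
          ∀ b ∈ B, (Φ.z b j = !v → ¬ dB Φ U x b j) := by
        push Not; rfl
      rw [ind_congr this, ind_forall]
      refine Finset.prod_congr rfl fun b _ => ?_
      split_ifs with hz
      · rw [← ind_not]; exact ind_congr (by simp [hz])
      · exact ind_true fun h => absurd h hz
    rw [hE, ave_cond B (fun b x => Br Φ b j x *
          if Φ.z b j = !v then (1 - ind (dB Φ U x b j)) else 1)
      (fun b => Vs Φ (Sum.inr b) (Sum.inl j)) j v ?_ (fun b _ => not_mem_Vs)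
      (fun b hb c hc hbc => Vs_disj' hG (hBj b hb) (hBj c hc) hbc)]
    · rw [Finset.mul_sum, Real.exp_sum, Finset.prod_filter, Finset.prod_filter, mul_assoc,
        mul_assoc, ← Finset.prod_mul_distrib, ← Finset.prod_mul_distrib]
      congr 1
      refine Finset.prod_congr rfl fun b hb => ?_
      by_cases hz : Φ.z b j = v
      · have hz' : Φ.z b j ≠ !v := by rw [hz]; simp
        simp only [if_pos hz, if_neg hz', mul_one]
        rw [Br_ave hG (hBj b hb) (hC b hb), ind_true hz, one_mul, exp_u hk2 hk hbp (hBj b hb)]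
      · have hz' : Φ.z b j = !v := by
          revert hz; cases Φ.z b j <;> cases v <;> simp
        simp only [if_pos hz', if_neg hz, one_mul]
        rw [Br_ave_d hG (hBj b hb) (hC b hb) hz, ← (hhat b j (hBj b hb)).2]
    · intro b hb
      refine dep_mul (Br_dep hG (hBj b hb) (hC b hb) v) ?_
      split_ifs with hz
      · simp only [dB_upd hG (hBj b hb)]
        exact dep_sub (dep_const _) (dB_dep hG (hBj b hb))
      · exact dep_const _

lemma tanh_ratio (s t : ℝ) : (1 - Real.tanh (s - t)) / 2 *
    (Real.exp (-2 * s) + Real.exp (-2 * t)) = Real.exp (-2 * s) := by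
  have e1 : Real.exp (-2 * s) = Real.exp (-(s + t)) * Real.exp (-(s - t)) := by
    rw [← Real.exp_add]; ring_nf
  have e2 : Real.exp (-2 * t) = Real.exp (-(s + t)) * Real.exp (s - t) := by
    rw [← Real.exp_add]; ring_nf
  rw [e1, e2, Real.tanh_eq_sinh_div_cosh, Real.sinh_eq, Real.cosh_eq]
  have := Real.exp_pos (s - t)
  have := Real.exp_pos (-(s - t))
  field_simp
  ring

lemma ave_split (j : V) (v : Bool) (f : (V → Bool) → ℝ) :
    ave f = ave (fun x => ind (x j = v) * f x) + ave (fun x => ind (x j = !v) * f x) := by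
  rw [← ave_add]
  congr 1; funext x
  cases hx : x j <;> cases v <;> simp [ind]

lemma claim (hk2 : 2 ≤ k) (hk : ∀ a : A, (Φ.scope a).card = k) (hG : Φ.factorGraph.IsTree)
    (hbp : Φ.IsBPFixedPoint k h u) (hhat : Φ.IsHatSolution U h hh hu) (n : ℕ) :
    ∀ (j : V) (a : A), j ∈ Φ.scope a →
      (sd Φ.factorGraph (Sum.inl j) (Sum.inr a)).ncard = n → Cl Φ U h hh j a := by
  induction n using Nat.strong_induction_on with
  | _ n ih =>
  intro j a hja hn
  have hC : ∀ b ∈ (Φ.nbr j).erase a, ∀ l ∈ (Φ.scope b).erase j, Cl Φ U h hh l b := by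
    intro b hb l hl
    rw [Finset.mem_erase, mem_nbr] at hb
    rw [Finset.mem_erase] at hl
    refine ih _ ?_ l b hl.2 rfl
    rw [← hn]
    exact (sd_card_lt hG ((adj_iff' Φ).2 hb.2) ((adj_iff Φ).2 hl.2) (by simpa using hl.1)).trans
      (sd_card_lt hG ((adj_iff Φ).2 hja) ((adj_iff' Φ).2 hb.2) (by simpa using hb.1))
  obtain ⟨P, hP, hcore⟩ := core hk2 hk hG hbp hhat (Finset.erase_subset a (Φ.nbr j)) hC
  have hWe : W Φ j a = fun x => ∏ b ∈ (Φ.nbr j).erase a, Br Φ b j x := by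
    funext x; exact W_eq hG hja x
  have hm1 := (hcore (Φ.z a j)).1
  have hm2 := (hcore (!Φ.z a j)).1
  have hm3 := (hcore (Φ.z a j)).2
  change _ = P * Real.exp (-2 * ∑ b ∈ Φ.agree j a, u b j) at hm1
  change _ = P * Real.exp (-2 * ∑ b ∈ Φ.disag j a, u b j) at hm2
  change _ = P * Real.exp (-2 * ∑ b ∈ Φ.agree j a, u b j) * ∏ b ∈ Φ.disag j a, (1 - hu b j) at hm3
  have hW : ave (W Φ j a) = P * (Real.exp (-2 * ∑ b ∈ Φ.agree j a, u b j)
      + Real.exp (-2 * ∑ b ∈ Φ.disag j a, u b j)) := by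
    rw [ave_split j (Φ.z a j), hWe, hm1, hm2]; ring
  have hmarg : ave (fun x => ind (x j = Φ.z a j) * W Φ j a x)
      = (1 - Real.tanh (h j a)) / 2 * ave (W Φ j a) := by
    rw [hW, hWe, hm1, (hbp a j hja).1, mul_left_comm, tanh_ratio]
  refine ⟨?_, ?_, hmarg, ?_⟩
  · have key : ∀ x y : V → Bool, (∀ v ∈ Vs Φ (Sum.inl j) (Sum.inr a), x v = y v) →
        W Φ j a x = W Φ j a y := by
      intro x y hxy
      rw [hWe]
      refine Finset.prod_congr rfl fun b hb => ?_
      have hjb := (mem_nbr Φ).1 (Finset.mem_of_mem_erase hb)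
      have h1 := Br_dep hG hjb (hC b hb) (x j) (fun v hv => hxy v (Vs_sub' hG hja hb hv))
      have h2 := hxy j (self_mem_Vs hG hja)
      simp only [Function.update_eq_self] at h1
      rw [h1, h2, Function.update_eq_self]
    exact fun x y hxy => key x y hxy
  · rw [hW]; positivity
  · by_cases hjU : j ∈ U
    · rw [(hhat a j hja).1, if_pos hjU, mul_one, ← hmarg]
      congr 1; funext x
      rw [ind_true (D_iff.2 (Or.inl hjU)), mul_one]
    · rw [(hhat a j hja).1, if_neg hjU]
      have hE : (fun x => ind (x j = Φ.z a j) * W Φ j a x * ind (D Φ U x j a))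
          = fun x => ind (x j = Φ.z a j) * W Φ j a x - ind (x j = Φ.z a j) *
            ((∏ b ∈ (Φ.nbr j).erase a, Br Φ b j x) * (1 - ind (∃ b ∈ (Φ.nbr j).erase a,
              Φ.z b j = !Φ.z a j ∧ dB Φ U x b j))) := by
        funext x
        have : D Φ U x j a ↔ ∃ b ∈ (Φ.nbr j).erase a,
              Φ.z b j = !Φ.z a j ∧ dB Φ U x b j := by
          rw [D_iff]
          simp only [hjU, false_or, mem_disag, and_assoc]
        rw [ind_congr this, hWe]
        ring
      rw [hE, ave_sub, hm3, mul_right_comm ((1 - Real.tanh (h j a)) / 2), ← hmarg, hWe, hm1]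
      ring

end formula

end TreeBP

/-- on a tree factor graph, for a uniformly random solution `x*`
and a variable `i ∉ U`, the probability that `i` is directly implied by the
restriction of `x*` to `U` equals
`ν_i(0)·(1 - ∏_{a ∈ ∂₊i}(1 - û_{a→i})) + ν_i(1)·(1 - ∏_{a ∈ ∂₋i}(1 - û_{a→i}))`. -/
theorem probability_directly_implied
    {V A : Type} [Fintype V] [Fintype A] [DecidableEq V] [DecidableEq A]
    (k : ℕ) (hk2 : 2 ≤ k) (Φ : KSAT V A) (hk : ∀ a : A, (Φ.scope a).card = k)
    (htree : Φ.factorGraph.IsTree) (hsat : (Φ.solutions).Nonempty)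
    (U : Finset V)
    (h : V → A → ℝ) (u : A → V → ℝ) (hbp : Φ.IsBPFixedPoint k h u)
    (hh : V → A → ℝ) (hu : A → V → ℝ) (hhat : Φ.IsHatSolution U h hh hu)
    (i : V) (hiU : i ∉ U) :
    ((Φ.solutions.filter fun y => ∃ v : Bool, KSAT.Derived Φ U y i v).card : ℝ) /
      (Φ.solutions.card : ℝ) =
    Φ.bpMarginal u i false * (1 - ∏ a ∈ Φ.nbrPos i, (1 - hu a i)) +
      Φ.bpMarginal u i true * (1 - ∏ a ∈ Φ.nbrNeg i, (1 - hu a i)) := by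
  have hC : ∀ b ∈ Φ.nbr i, ∀ l ∈ (Φ.scope b).erase i, TreeBP.Cl Φ U h hh l b :=
    fun b _ l hl => TreeBP.claim hk2 hk htree hbp hhat _ l b (Finset.mem_of_mem_erase hl) rfl
  obtain ⟨P, hP, hcore⟩ := TreeBP.core hk2 hk htree hbp hhat (Finset.Subset.refl (Φ.nbr i)) hC
  have hf := hcore false
  have ht := hcore true
  change _ = P * Real.exp (-2 * ∑ b ∈ Φ.nbrNeg i, u b i) ∧ _ =
    P * Real.exp (-2 * ∑ b ∈ Φ.nbrNeg i, u b i) * ∏ b ∈ Φ.nbrPos i, (1 - hu b i) at hf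
  change _ = P * Real.exp (-2 * ∑ b ∈ Φ.nbrPos i, u b i) ∧ _ =
    P * Real.exp (-2 * ∑ b ∈ Φ.nbrPos i, u b i) * ∏ b ∈ Φ.nbrNeg i, (1 - hu b i) at ht
  simp only [← TreeBP.root_eq htree i] at hf ht
  have hN := TreeBP.card_pos' (V := V)
  have hden : (Φ.solutions.card : ℝ) / (Fintype.card (V → Bool) : ℝ)
      = TreeBP.ave (fun x => TreeBP.ind (Φ.IsSolution x)) := by
    unfold TreeBP.ave TreeBP.ind KSAT.solutions
    rw [Finset.card_filter]; push_cast; rfl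
  have hnum : ((Φ.solutions.filter fun y => ∃ v : Bool, KSAT.Derived Φ U y i v).card : ℝ) /
      (Fintype.card (V → Bool) : ℝ)
      = TreeBP.ave (fun x => TreeBP.ind (Φ.IsSolution x) *
        TreeBP.ind (∃ v : Bool, KSAT.Derived Φ U x i v)) := by
    simp only [← TreeBP.ind_and]
    unfold TreeBP.ave TreeBP.ind KSAT.solutions
    rw [Finset.filter_filter, Finset.card_filter]; push_cast; congr!
  have hv : ∀ v : Bool, TreeBP.ave (fun x => TreeBP.ind (x i = v) *
      (TreeBP.ind (Φ.IsSolution x) * TreeBP.ind (∃ v : Bool, KSAT.Derived Φ U x i v)))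
      = TreeBP.ave (fun x => TreeBP.ind (x i = v) * TreeBP.ind (Φ.IsSolution x)) -
        TreeBP.ave (fun x => TreeBP.ind (x i = v) * (TreeBP.ind (Φ.IsSolution x) *
          (1 - TreeBP.ind (∃ b ∈ Φ.nbr i, Φ.z b i = !v ∧ TreeBP.dB Φ U x b i)))) := by
    intro v
    rw [← TreeBP.ave_sub]
    congr 1; funext x
    by_cases hx : Φ.IsSolution x
    · by_cases hxi : x i = v
      · have : (∃ v : Bool, KSAT.Derived Φ U x i v) ↔
            ∃ b ∈ Φ.nbr i, Φ.z b i = !v ∧ TreeBP.dB Φ U x b i := by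
          rw [← TreeBP.derived_root hx hiU]
          constructor
          · rintro ⟨w, hw⟩
            have := TreeBP.derived_sound hx hw
            rw [← hxi, this]; exact hw
          · intro hw; exact ⟨v, hw⟩
        rw [TreeBP.ind_congr this]; ring
      · rw [TreeBP.ind_false hxi]; ring
    · rw [TreeBP.ind_false hx]; ring
  have hsplit1 := TreeBP.ave_split i false (fun x => TreeBP.ind (Φ.IsSolution x))
  have hsplit2 := TreeBP.ave_split i false (fun x => TreeBP.ind (Φ.IsSolution x) *
        TreeBP.ind (∃ v : Bool, KSAT.Derived Φ U x i v))
  rw [hv false, hv (!false)] at hsplit2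
  simp only [Bool.not_false, Bool.not_true] at hsplit1 hsplit2 hf ht
  rw [hf.1, ht.1] at hsplit1
  rw [hf.1, ht.1, hf.2, ht.2] at hsplit2
  rw [← div_div_div_cancel_right₀ hN.ne', hden, hnum, hsplit1, hsplit2]
  have r1 := TreeBP.tanh_ratio (∑ b ∈ Φ.nbrPos i, u b i) (∑ b ∈ Φ.nbrNeg i, u b i)
  have e1 := Real.exp_pos (-2 * ∑ b ∈ Φ.nbrPos i, u b i)
  have e2 := Real.exp_pos (-2 * ∑ b ∈ Φ.nbrNeg i, u b i)
  simp only [KSAT.bpMarginal, KSAT.field, if_true, Bool.false_eq_true, if_false]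
  rw [div_eq_iff (by positivity)]
  generalize Real.tanh _ = T at *
  generalize Real.exp (-2 * ∑ b ∈ Φ.nbrPos i, u b i) = a at *
  generalize Real.exp (-2 * ∑ b ∈ Φ.nbrNeg i, u b i) = b at *
  have r2 : (1 + T) / 2 * (a + b) = b := by linarith
  generalize ∏ b ∈ Φ.nbrPos i, (1 - hu b i) = p at *
  generalize ∏ b ∈ Φ.nbrNeg i, (1 - hu b i) = q at *
  linear_combination (-P * (1 - p)) * r2 + (-P * (1 - q)) * r1
end

section
/- Let k≥3 be an integer and define α̂_spin(k)=(2^k/k)·((k−1)/(k−2))^{k−2}. If 0<α<α̂_spin(k), then for every θ∈[0,1] and every fixed point φ∈[0,1] of g_θ, the derivative g_θ'(φ)=(1−θ)·c·(k−1)·φ^{k−2}·exp(−c·φ^{k−1}) satisfies g_θ'(φ) ≤ α/α̂_spin(k) < 1. -/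
/-- `g_θ(φ) = θ + (1-θ)·(1 - exp(-c·φ^{k-1}))` with `c = αk/2^k`. -/
noncomputable def gTheta (k : ℕ) (α θ φ : ℝ) : ℝ :=
  θ + (1 - θ) * (1 - Real.exp (-(α * k / 2 ^ k) * φ ^ (k - 1)))

/-- The set of fixed points of `g_θ` in `[0,1]`. -/
def gFixSet (k : ℕ) (α θ : ℝ) : Set ℝ :=
  {φ : ℝ | φ ∈ Set.Icc (0 : ℝ) 1 ∧ gTheta k α θ φ = φ}

/-- The derivative `g_θ'(φ) = (1-θ)·c·(k-1)·φ^{k-2}·exp(-c·φ^{k-1})`,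
`c = αk/2^k`. -/
noncomputable def gThetaDeriv (k : ℕ) (α θ φ : ℝ) : ℝ :=
  (1 - θ) * (α * k / 2 ^ k) * (k - 1) * φ ^ (k - 2) *
    Real.exp (-(α * k / 2 ^ k) * φ ^ (k - 1))

/-- The spinodal threshold `α̂_spin(k) = (2^k/k)·((k-1)/(k-2))^{k-2}`. -/
noncomputable def alphaSpin (k : ℕ) : ℝ :=
  2 ^ k / k * (((k : ℝ) - 1) / ((k : ℝ) - 2)) ^ (k - 2)

theorem aux_amgm (n : ℕ) (hn : 1 ≤ n) (x : ℝ) (hx0 : 0 ≤ x) :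
    ((n : ℝ) + 1) * x ^ n * (1 - x) ≤ ((n : ℝ) / (n + 1)) ^ n := by
  have hn' : (1 : ℝ) ≤ n := by exact_mod_cast hn
  rcases hx0.eq_or_lt with h | h
  · subst h
    rw [zero_pow (by omega)]
    simp only [mul_zero, zero_mul]
    positivity
  · set t : ℝ := (n : ℝ) / (n + 1) with ht
    have htp : 0 < t := by positivity
    have hb := one_add_mul_le_pow (a := t / x - 1)
      (by have : 0 < t / x := by positivity
          linarith) n
    have h2 : ((n : ℝ) + 1) * (1 - x) ≤ 1 + n * (t / x - 1) := by
      have e : 1 + n * (t / x - 1) - ((n : ℝ) + 1) * (1 - x)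
          = (((n : ℝ) + 1) * x - n) ^ 2 / (((n : ℝ) + 1) * x) := by
        rw [ht]; field_simp; ring
      have : 0 ≤ (((n : ℝ) + 1) * x - n) ^ 2 / (((n : ℝ) + 1) * x) := by positivity
      linarith
    have h3 : ((n : ℝ) + 1) * (1 - x) ≤ (t / x) ^ n := by
      have e : 1 + (t / x - 1) = t / x := by ring
      rw [e] at hb
      exact h2.trans hb
    rw [div_pow, le_div_iff₀ (by positivity)] at h3
    linarith

/-- for `k ≥ 3` and `0 < α < α̂_spin(k)`, at every fixed point
`φ ∈ [0,1]` of `g_θ` (for any `θ ∈ [0,1]`) the derivative satisfies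
`g_θ'(φ) ≤ α/α̂_spin(k) < 1`. -/
theorem gTheta_deriv_lt_one_below_spinodal
    (k : ℕ) (hk : 3 ≤ k) (α : ℝ) (hα : 0 < α) (hαs : α < alphaSpin k)
    (θ : ℝ) (hθ : θ ∈ Set.Icc (0 : ℝ) 1)
    (φ : ℝ) (hφ : φ ∈ Set.Icc (0 : ℝ) 1) (hfix : gTheta k α θ φ = φ) :
    gThetaDeriv k α θ φ ≤ α / alphaSpin k ∧ α / alphaSpin k < 1 := by
  obtain ⟨n, rfl⟩ : ∃ n, k = n + 2 := ⟨k - 2, by omega⟩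
  have hn : 1 ≤ n := by omega
  have hn' : (1 : ℝ) ≤ n := by exact_mod_cast hn
  have hs : 0 < alphaSpin (n + 2) := hα.trans hαs
  refine ⟨?_, (div_lt_one hs).2 hαs⟩
  have key := aux_amgm n hn φ hφ.1
  unfold gTheta at hfix
  unfold gThetaDeriv
  set c : ℝ := α * ((n + 2 : ℕ) : ℝ) / 2 ^ (n + 2) with hc
  have hcp : 0 < c := by positivity
  have e1 : α / alphaSpin (n + 2) = c * ((n : ℝ) / (n + 1)) ^ n := by
    unfold alphaSpin
    rw [hc]
    have a1 : ((n + 2 : ℕ) : ℝ) - 1 = n + 1 := by push_cast; ring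
    have a2 : ((n + 2 : ℕ) : ℝ) - 2 = n := by push_cast; ring
    rw [a1, a2, Nat.add_sub_cancel, div_pow, div_pow]
    have : ((n + 2 : ℕ) : ℝ) ≠ 0 := by positivity
    have : (n : ℝ) ^ n ≠ 0 := by positivity
    field_simp
  rw [e1, Nat.add_sub_cancel]
  have a1 : ((n + 2 : ℕ) : ℝ) - 1 = n + 1 := by push_cast; ring
  rw [a1]
  set E := Real.exp (-c * φ ^ (n + 2 - 1))
  have hE : (1 - θ) * E = 1 - φ := by linarith
  calc (1 - θ) * c * ((n : ℝ) + 1) * φ ^ n * E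
      = c * (((n : ℝ) + 1) * φ ^ n * ((1 - θ) * E)) := by ring
    _ = c * (((n : ℝ) + 1) * φ ^ n * (1 - φ)) := by rw [hE]
    _ ≤ _ := mul_le_mul_of_nonneg_left key hcp.le
end

section
/- Let k≥3 be an integer and 0<α<α̂_spin(k)=(2^k/k)·((k−1)/(k−2))^{k−2}. Then for every θ∈[0,1] the function g_θ has exactly one fixed point φ̂(θ) in [0,1], and the map θ↦φ̂(θ) is continuous on [0,1]. -/
lemma aux_ineq (t : ℝ) (ht : 0 ≤ t) (n : ℕ) : ((n : ℝ) + 1) * t ^ n - n * t ^ (n + 1) ≤ 1 := by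
  induction n with
  | zero => simp
  | succ m ih =>
    have h : 0 ≤ ((m : ℝ) + 1) * t ^ m * (1 - t) ^ 2 := by positivity
    push_cast
    ring_nf at h ih ⊢
    linarith

lemma aux_max (x : ℝ) (hx : 0 ≤ x) (n : ℕ) (hn : 1 ≤ n) :
    ((n : ℝ) + 1) * (1 - x) * x ^ n * ((((n : ℝ) + 1) / n) ^ n) ≤ 1 := by
  have hn' : (0 : ℝ) < n := by exact_mod_cast hn
  have h := aux_ineq (x * (((n : ℝ) + 1) / n)) (by positivity) n
  refine le_trans (le_of_eq ?_) h
  rw [pow_succ, mul_pow]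
  field_simp

lemma aux_anti (n : ℕ) (hn : 1 ≤ n) (c : ℝ) (hc : 0 < c)
    (hcs : c < (((n : ℝ) + 1) / n) ^ n) :
    StrictMonoOn (fun x : ℝ => 1 - (1 - x) * Real.exp (c * x ^ (n + 1))) (Set.Icc 0 1) := by
  apply strictMonoOn_of_deriv_pos (convex_Icc 0 1)
  · fun_prop
  · intro x hx
    rw [interior_Icc] at hx
    have hd : HasDerivAt (fun x : ℝ => 1 - (1 - x) * Real.exp (c * x ^ (n + 1)))
        (-((-1) * Real.exp (c * x ^ (n + 1)) + (1 - x) *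
          (Real.exp (c * x ^ (n + 1)) * (c * (((n + 1 : ℕ) : ℝ) * x ^ n))))) x := by
      have h1 : HasDerivAt (fun x : ℝ => 1 - x) (-1) x := by
        simpa using (hasDerivAt_id x).const_sub 1
      have h2 : HasDerivAt (fun x : ℝ => c * x ^ (n + 1)) (c * (((n + 1 : ℕ) : ℝ) * x ^ n)) x := by
        simpa using (hasDerivAt_pow (n + 1) x).const_mul c
      exact (h1.mul h2.exp).const_sub 1
    rw [hd.deriv]
    have h := aux_max x hx.1.le n hn
    have hA : 0 < ((n : ℝ) + 1) * (1 - x) * x ^ n := by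
      have := hx.1
      have : 0 < 1 - x := by linarith [hx.2]
      positivity
    have h3 := mul_lt_mul_of_pos_left hcs hA
    have h4 : ((n : ℝ) + 1) * (1 - x) * x ^ n * c < 1 := lt_of_lt_of_le h3 h
    have h5 := mul_pos (Real.exp_pos (c * x ^ (n + 1))) (sub_pos.2 h4)
    push_cast
    linarith

/-- for `k ≥ 3` and `0 < α < α̂_spin(k)`, for every `θ ∈ [0,1]`
the map `g_θ` has exactly one fixed point `φ̂(θ)` in `[0,1]`, and the map
`θ ↦ φ̂(θ)` is continuous on `[0,1]`. -/
theorem gTheta_unique_fixed_point_continuous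
    (k : ℕ) (hk : 3 ≤ k) (α : ℝ) (hα : 0 < α) (hαs : α < alphaSpin k) :
    (∀ θ ∈ Set.Icc (0 : ℝ) 1, ∃! φ : ℝ, φ ∈ gFixSet k α θ) ∧
    ∃ F : ℝ → ℝ, ContinuousOn F (Set.Icc (0 : ℝ) 1) ∧
      ∀ θ ∈ Set.Icc (0 : ℝ) 1, F θ ∈ gFixSet k α θ := by
  obtain ⟨n, rfl⟩ : ∃ n, k = n + 2 := ⟨k - 2, by omega⟩
  have hn : 1 ≤ n := by omega
  have hn' : (0 : ℝ) < n := by exact_mod_cast hn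
  obtain ⟨c, hc⟩ : ∃ c : ℝ, c = α * ((n + 2 : ℕ) : ℝ) / 2 ^ (n + 2) := ⟨_, rfl⟩
  have hc0 : 0 < c := by rw [hc]; positivity
  have hcs : c < (((n : ℝ) + 1) / n) ^ n := by
    have e : alphaSpin (n + 2) = 2 ^ (n + 2) / ((n + 2 : ℕ) : ℝ) * (((n : ℝ) + 1) / n) ^ n := by
      unfold alphaSpin
      have e1 : ((n + 2 : ℕ) : ℝ) - 1 = n + 1 := by push_cast; ring
      have e2 : ((n + 2 : ℕ) : ℝ) - 2 = n := by push_cast; ring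
      rw [e1, e2, Nat.add_sub_cancel]
    rw [e] at hαs
    have hp : (0 : ℝ) < ((n + 2 : ℕ) : ℝ) / 2 ^ (n + 2) := by positivity
    have h := mul_lt_mul_of_pos_right hαs hp
    have e3 : 2 ^ (n + 2) / ((n + 2 : ℕ) : ℝ) * (((n : ℝ) + 1) / n) ^ n *
        (((n + 2 : ℕ) : ℝ) / 2 ^ (n + 2)) = (((n : ℝ) + 1) / n) ^ n := by
      have : ((n + 2 : ℕ) : ℝ) ≠ 0 := by positivity
      generalize (((n : ℝ) + 1) / n) ^ n = z
      field_simp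
    rw [e3] at h
    rw [hc, mul_div_assoc]
    exact h
  have hmono := aux_anti n hn c hc0 hcs
  set G : ℝ → ℝ := fun x => 1 - (1 - x) * Real.exp (c * x ^ (n + 1)) with hG
  have hGc : Continuous G := by fun_prop
  have G0 : G 0 = 0 := by simp [hG]
  have G1 : G 1 = 1 := by simp [hG]
  have hfix : ∀ θ φ : ℝ, φ ∈ gFixSet (n + 2) α θ ↔ φ ∈ Set.Icc (0 : ℝ) 1 ∧ G φ = θ := by
    intro θ φ
    unfold gFixSet gTheta
    rw [Set.mem_setOf_eq, ← hc, show n + 2 - 1 = n + 1 by omega, neg_mul, Real.exp_neg]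
    refine and_congr_right fun _ => ?_
    have hE := Real.exp_pos (c * φ ^ (n + 1))
    simp only [hG]
    generalize Real.exp (c * φ ^ (n + 1)) = E at hE
    have hE' := hE.ne'
    constructor
    · intro h
      field_simp at h
      linarith
    · intro h
      field_simp
      linarith
  have hmaps : ∀ x : Set.Icc (0 : ℝ) 1, G x ∈ Set.Icc (0 : ℝ) 1 := by
    intro x
    have a := hmono.monotoneOn (Set.left_mem_Icc.2 zero_le_one) x.2 x.2.1
    have b := hmono.monotoneOn x.2 (Set.right_mem_Icc.2 zero_le_one) x.2.2
    exact ⟨by linarith, by linarith⟩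
  let g : Set.Icc (0 : ℝ) 1 → Set.Icc (0 : ℝ) 1 := fun x => ⟨G x, hmaps x⟩
  have hg : StrictMono g := fun x y hxy => hmono x.2 y.2 hxy
  have hs : Function.Surjective g := by
    intro y
    have h := intermediate_value_Icc (zero_le_one (α := ℝ)) hGc.continuousOn
    rw [G0, G1] at h
    obtain ⟨x, hx, hxy⟩ := h y.2
    exact ⟨⟨x, hx⟩, Subtype.ext hxy⟩
  let e := hg.orderIsoOfSurjective g hs
  have he : ∀ y, G (e.symm y) = y := fun y =>
    congrArg Subtype.val (e.apply_symm_apply y)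
  constructor
  · intro θ hθ
    refine ⟨e.symm ⟨θ, hθ⟩, (hfix _ _).2 ⟨(e.symm ⟨θ, hθ⟩).2, he _⟩, ?_⟩
    intro y hy
    obtain ⟨h1, h2⟩ := (hfix _ _).1 hy
    exact hmono.injOn h1 (e.symm ⟨θ, hθ⟩).2 (h2.trans (he ⟨θ, hθ⟩).symm)
  · refine ⟨fun θ => e.symm (Set.projIcc 0 1 zero_le_one θ), ?_, ?_⟩
    · exact (continuous_subtype_val.comp
        (e.symm.continuous.comp continuous_projIcc)).continuousOn
    · intro θ hθ
      refine (hfix _ _).2 ⟨(e.symm _).2, ?_⟩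
      rw [he, Set.projIcc_of_mem _ hθ]
end

section
/- Let k≥3 be an integer and define, for α>0, the tangency set T(k)={α>0 : there exist θ∈[0,1] and φ∈[0,1] with g_θ(φ)=φ and g_θ'(φ)=1}, where g_θ'(φ)=(1−θ)·c·(k−1)·φ^{k−2}·exp(−c·φ^{k−1}). Then T(k) is nonempty, its infimum equals α̂_spin(k)=(2^k/k)·((k−1)/(k−2))^{k−2}, and this infimum is attained (α̂_spin(k)∈T(k), with tangency point φ=(k−2)/(k−1)). -/
theorem aux_ineq_s18 (m : ℕ) (x : ℝ) (hx : 0 ≤ x) :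
    x ^ m * (m + 1) - m * x ^ (m + 1) ≤ 1 := by
  induction m with
  | zero => simp
  | succ n ih =>
    have h : 0 ≤ ((n : ℝ) + 1) * x ^ n * (1 - x) ^ 2 := by positivity
    push_cast
    have e : x ^ (n + 1) * ((n : ℝ) + 1 + 1) - (n + 1) * x ^ (n + 1 + 1)
      = (x ^ n * (n + 1) - n * x ^ (n + 1)) - ((n : ℝ) + 1) * x ^ n * (1 - x) ^ 2 := by ring
    rw [e]; linarith

theorem aux_point (k : ℕ) (hk : 3 ≤ k) : ∃ θ ∈ Set.Icc (0 : ℝ) 1,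
      gTheta k (alphaSpin k) θ (((k : ℝ) - 2) / ((k : ℝ) - 1)) =
          ((k : ℝ) - 2) / ((k : ℝ) - 1) ∧
      gThetaDeriv k (alphaSpin k) θ (((k : ℝ) - 2) / ((k : ℝ) - 1)) = 1 := by
  obtain ⟨m, rfl⟩ : ∃ m, k = m + 2 := ⟨k - 2, by omega⟩
  have hm : (0 : ℝ) < m := by exact_mod_cast (by omega : 0 < m)
  have hc : alphaSpin (m + 2) * ((m + 2 : ℕ) : ℝ) / 2 ^ (m + 2) = (((m : ℝ) + 1) / m) ^ m := by
    unfold alphaSpin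
    have e1 : (((m + 2 : ℕ) : ℝ) - 1) = m + 1 := by push_cast; ring
    have e2 : (((m + 2 : ℕ) : ℝ) - 2) = m := by push_cast; ring
    have e3 : m + 2 - 2 = m := by omega
    rw [e1, e2, e3]
    have : ((m + 2 : ℕ) : ℝ) ≠ 0 := by positivity
    field_simp
  have e1 : (((m + 2 : ℕ) : ℝ) - 1) = m + 1 := by push_cast; ring
  have e2 : (((m + 2 : ℕ) : ℝ) - 2) = m := by push_cast; ring
  have e3 : m + 2 - 2 = m := by omega
  have e4 : m + 2 - 1 = m + 1 := by omega
  have h0 : (((m : ℝ) + 1) / m) ^ m * ((m : ℝ) / (m + 1)) ^ m = 1 := by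
    rw [← mul_pow]
    have : (((m : ℝ) + 1) / m) * ((m : ℝ) / (m + 1)) = 1 := by field_simp
    rw [this, one_pow]
  have h1 : -(((m : ℝ) + 1) / m) ^ m * ((m : ℝ) / (m + 1)) ^ (m + 1) = -((m : ℝ) / (m + 1)) := by
    rw [pow_succ]; linear_combination (-((m : ℝ) / (m + 1))) * h0
  unfold gTheta gThetaDeriv
  rw [hc, e1, e2, e3, e4, h1]
  have hp : (1 - (m : ℝ) / (m + 1)) * (m + 1) = 1 := by field_simp; ring
  have hp0 : 0 ≤ 1 - (m : ℝ) / (m + 1) := by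
    have : 1 - (m : ℝ) / (m + 1) = 1 / (m + 1) := by field_simp; ring
    rw [this]; positivity
  generalize (m : ℝ) / (m + 1) = p at *
  have hE : Real.exp p * Real.exp (-p) = 1 := by rw [← Real.exp_add]; simp
  refine ⟨1 - (1 - p) * Real.exp p, ⟨?_, ?_⟩, ?_, ?_⟩
  · have := Real.add_one_le_exp (-p)
    have := mul_le_mul_of_nonneg_left this (Real.exp_pos p).le
    linarith
  · have := mul_nonneg hp0 (Real.exp_pos p).le
    linarith
  · linear_combination (-(1 - p)) * hE
  · linear_combination (1 - p) * ((((m : ℝ) + 1) / m) ^ m) * (m + 1) * p ^ m * hE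
      + h0 * ((1 - p) * (m + 1)) + hp

theorem aux_lower (k : ℕ) (hk : 3 ≤ k) (α θ φ : ℝ) (hα : 0 < α) (hφ : φ ∈ Set.Icc (0 : ℝ) 1)
    (h1 : gTheta k α θ φ = φ) (h2 : gThetaDeriv k α θ φ = 1) : alphaSpin k ≤ α := by
  obtain ⟨m, rfl⟩ : ∃ m, k = m + 2 := ⟨k - 2, by omega⟩
  have hm : (0 : ℝ) < m := by exact_mod_cast (by omega : 0 < m)
  unfold gTheta at h1
  unfold gThetaDeriv at h2
  unfold alphaSpin
  have e1 : (((m + 2 : ℕ) : ℝ) - 1) = m + 1 := by push_cast; ring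
  have e2 : (((m + 2 : ℕ) : ℝ) - 2) = m := by push_cast; ring
  have e3 : m + 2 - 2 = m := by omega
  have hK : (0 : ℝ) < ((m + 2 : ℕ) : ℝ) := by positivity
  rw [e1, e3] at h2
  rw [e1, e2, e3]
  obtain ⟨c, hc⟩ : ∃ c, c = α * ((m + 2 : ℕ) : ℝ) / 2 ^ (m + 2) := ⟨_, rfl⟩
  have hc0 : 0 < c := by rw [hc]; positivity
  have ha : α = 2 ^ (m + 2) / ((m + 2 : ℕ) : ℝ) * c := by rw [hc]; field_simp
  rw [← hc] at h1 h2
  rw [ha]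
  refine mul_le_mul_of_nonneg_left ?_ (by positivity)
  generalize Real.exp (-c * φ ^ (m + 2 - 1)) = E at *
  have h3 : c * ((1 - φ) * (m + 1) * φ ^ m) = 1 := by
    linear_combination h2 + c * (m + 1) * φ ^ m * (h1)
  have hr : 0 < ((m : ℝ) + 1) / m := by positivity
  have h4 := aux_ineq_s18 m (((m : ℝ) + 1) / m * φ) (mul_nonneg hr.le hφ.1)
  have h5 : (((m : ℝ) + 1) / m) ^ m * ((1 - φ) * (m + 1) * φ ^ m) ≤ 1 := by
    refine le_trans (le_of_eq ?_) h4
    have hrm : ((m : ℝ) + 1) / m * m = m + 1 := by field_simp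
    generalize ((m : ℝ) + 1) / m = r at *
    rw [pow_succ, mul_pow]
    linear_combination (r ^ m * φ ^ m * φ) * hrm
  have h6 := mul_le_mul_of_nonneg_left h5 hc0.le
  calc _ = c * ((((m : ℝ) + 1) / m) ^ m * ((1 - φ) * (m + 1) * φ ^ m)) := by
        linear_combination (-(((m : ℝ) + 1) / m) ^ m) * h3
    _ ≤ _ := by linarith

/-- the tangency set
`T(k) = {α > 0 : ∃ θ,φ ∈ [0,1], g_θ(φ) = φ ∧ g_θ'(φ) = 1}` is nonempty, its
infimum is `α̂_spin(k)` and it is attained (i.e. `α̂_spin(k)` is the least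
element of `T(k)`), with tangency point `φ = (k-2)/(k-1)`. -/
theorem tangency_set_least_element
    (k : ℕ) (hk : 3 ≤ k) :
    (letI T : Set ℝ := {α : ℝ | 0 < α ∧ ∃ θ ∈ Set.Icc (0 : ℝ) 1,
        ∃ φ ∈ Set.Icc (0 : ℝ) 1, gTheta k α θ φ = φ ∧ gThetaDeriv k α θ φ = 1}
     T.Nonempty ∧ IsLeast T (alphaSpin k)) ∧
    ∃ θ ∈ Set.Icc (0 : ℝ) 1,
      gTheta k (alphaSpin k) θ (((k : ℝ) - 2) / ((k : ℝ) - 1)) =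
          ((k : ℝ) - 2) / ((k : ℝ) - 1) ∧
      gThetaDeriv k (alphaSpin k) θ (((k : ℝ) - 2) / ((k : ℝ) - 1)) = 1 := by
  have hp := aux_point k hk
  have hk' : (3 : ℝ) ≤ k := by exact_mod_cast hk
  have hpos : 0 < alphaSpin k := by
    unfold alphaSpin
    have h1 : 0 < (k : ℝ) - 1 := by linarith
    have h2 : 0 < (k : ℝ) - 2 := by linarith
    positivity
  have hmem : alphaSpin k ∈ {α : ℝ | 0 < α ∧ ∃ θ ∈ Set.Icc (0 : ℝ) 1,
        ∃ φ ∈ Set.Icc (0 : ℝ) 1, gTheta k α θ φ = φ ∧ gThetaDeriv k α θ φ = 1} := by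
    obtain ⟨θ, hθ, h⟩ := hp
    have h1 : 0 < (k : ℝ) - 1 := by linarith
    have h2 : 0 < (k : ℝ) - 2 := by linarith
    refine ⟨hpos, θ, hθ, _, ⟨by positivity, ?_⟩, h⟩
    rw [div_le_one h1]; linarith
  refine ⟨⟨⟨_, hmem⟩, hmem, ?_⟩, hp⟩
  rintro α ⟨hα, θ, _, φ, hφ, h1, h2⟩
  exact aux_lower k hk α θ φ hα hφ h1 h2
end
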